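/- arXiv:2510.04417 — 5 statements merged into one kernel-verified Lean document; each statement's English description precedes it below -/
import Mathlib

section
/- Invariance of the PID synergy optimization under componentwise measurable equivalences (Corollary 4.2): let p be a probability measure on 𝒳₁ × 𝒳₂ × 𝒴, let Δ_p be the set of probability measures on 𝒳₁ × 𝒳₂ × 𝒴 with the same (𝒳₁ × 𝒴)- and (𝒳₂ × 𝒴)-marginals as p, let f₁, f₂, f_Y be measurable equivalences of 𝒳₁, 𝒳₂, 𝒴 respectively, and let p̂ := (f₁ × f₂ × f_Y)_* p. Then inf_{q ∈ Δ_p} I₍₁₂₎,Y(q) = inf_{q̂ ∈ Δ_{p̂}} I₍₁₂₎,Y(q̂), where for a measure q on 𝒳₁ × 𝒳₂ × 𝒴, I₍₁₂₎,Y(q) := KL(q ‖ q₁₂ ⊗ q_Y) is the mutual information between the (𝒳₁ × 𝒳₂)-coordinates and the 𝒴-coordinate, q₁₂ being the marginal of q on 𝒳₁ × 𝒳₂ and q_Y its marginal on 𝒴. -/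
/-!
Along a measurable embedding, Radon–Nikodym derivatives are transported a.e., so the divergence of
the pushforwards is the divergence of the original measures. Pushing forward along a product of maps
commutes with every marginal, so mutual information is preserved and `Δ_p` is sent into `Δ_{p̂}`.
It is sent *onto* `Δ_{p̂}`: the marginals of `q̂ ∈ Δ_{p̂}` are carried by the ranges of the
embeddings, hence `q̂` is carried by the range of their product and is the pushforward of its
pullback.
-/

open MeasureTheory

open Classical in
/-- Kullback–Leibler divergence `KL(P ‖ Q)`, valued in `EReal`. -/
noncomputable def klDiv {α : Type*} [MeasurableSpace α] (P Q : Measure α) : EReal :=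
  if P ≪ Q ∧ Integrable (fun x => Real.log (P.rnDeriv Q x).toReal) P
  then ((∫ x, Real.log (P.rnDeriv Q x).toReal ∂P : ℝ) : EReal)
  else ⊤

/-- Mutual information of a measure on a product space: `I(P) := KL(P ‖ P₁ ⊗ P₂)`. -/
noncomputable def mutualInfo {α β : Type*} [MeasurableSpace α] [MeasurableSpace β]
    (P : Measure (α × β)) : EReal :=
  klDiv P ((P.map Prod.fst).prod (P.map Prod.snd))

/-- `I₍₁₂₎,Y(q) := KL(q ‖ q₁₂ ⊗ q_Y)`: the mutual information between the
`(𝒳₁ × 𝒳₂)`-coordinates jointly and the `𝒴`-coordinate of a measure on `𝒳₁ × 𝒳₂ × 𝒴`. -/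
noncomputable def mi₁₂Y {X₁ X₂ Y : Type*} [MeasurableSpace X₁] [MeasurableSpace X₂]
    [MeasurableSpace Y] (q : Measure (X₁ × X₂ × Y)) : EReal :=
  mutualInfo (q.map fun z => ((z.1, z.2.1), z.2.2))

/-- `Δ_p`: the set of probability measures on `𝒳₁ × 𝒳₂ × 𝒴` having the same
`(𝒳₁ × 𝒴)`- and `(𝒳₂ × 𝒴)`-marginals as `p`. -/
def marginalSet {X₁ X₂ Y : Type*} [MeasurableSpace X₁] [MeasurableSpace X₂]
    [MeasurableSpace Y] (p : Measure (X₁ × X₂ × Y)) : Set (Measure (X₁ × X₂ × Y)) :=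
  {q | IsProbabilityMeasure q ∧
    q.map (fun z => (z.1, z.2.2)) = p.map (fun z => (z.1, z.2.2)) ∧
    q.map (fun z => (z.2.1, z.2.2)) = p.map (fun z => (z.2.1, z.2.2))}

open Set

theorem absolutelyContinuous_map_iff_of_measurableEmbedding {α β : Type*} [MeasurableSpace α]
    [MeasurableSpace β] {f : α → β} (hf : MeasurableEmbedding f) {P Q : Measure α} :
    P.map f ≪ Q.map f ↔ P ≪ Q := by
  refine ⟨fun h s hs => ?_, hf.absolutelyContinuous_map⟩
  rw [← hf.injective.preimage_image s, ← hf.map_apply] at hs ⊢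
  exact h hs

theorem klDiv_map_of_measurableEmbedding {α β : Type*} [MeasurableSpace α] [MeasurableSpace β]
    {f : α → β} (hf : MeasurableEmbedding f) (P Q : Measure α) [SigmaFinite P] [SigmaFinite Q] :
    klDiv (P.map f) (Q.map f) = klDiv P Q := by
  unfold klDiv
  rw [absolutelyContinuous_map_iff_of_measurableEmbedding hf]
  by_cases hPQ : P ≪ Q
  · have hlog : (fun x => Real.log ((P.map f).rnDeriv (Q.map f) (f x)).toReal)
        =ᵐ[P] fun x => Real.log (P.rnDeriv Q x).toReal := by
      filter_upwards [hPQ.ae_le (hf.rnDeriv_map P Q)] with x hx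
      rw [hx]
    have hint : Integrable (fun y => Real.log ((P.map f).rnDeriv (Q.map f) y).toReal) (P.map f)
        ↔ Integrable (fun x => Real.log (P.rnDeriv Q x).toReal) P :=
      hf.integrable_map_iff.trans (integrable_congr hlog)
    rw [hint, hf.integral_map, integral_congr_ae hlog]
  · simp only [hPQ, false_and, if_false]

theorem measure_map_comm {α β γ δ : Type*} [MeasurableSpace α] [MeasurableSpace β]
    [MeasurableSpace γ] [MeasurableSpace δ] {f : α → β} {π' : β → δ} {π : α → γ} {g : γ → δ}
    (hf : Measurable f) (hπ' : Measurable π') (hπ : Measurable π) (hg : Measurable g)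
    (h : π' ∘ f = g ∘ π) (μ : Measure α) :
    (μ.map f).map π' = (μ.map π).map g := by
  rw [Measure.map_map hπ' hf, Measure.map_map hg hπ, h]

theorem mutualInfo_map_prodMap {α β α' β' : Type*} [MeasurableSpace α] [MeasurableSpace β]
    [MeasurableSpace α'] [MeasurableSpace β'] {f : α → α'} {g : β → β'}
    (hf : MeasurableEmbedding f) (hg : MeasurableEmbedding g)
    (P : Measure (α × β)) [IsFiniteMeasure P] :
    mutualInfo (P.map (Prod.map f g)) = mutualInfo P := by
  have hfg := hf.prodMap hg
  have hfst : (P.map (Prod.map f g)).map Prod.fst = (P.map Prod.fst).map f :=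
    measure_map_comm hfg.measurable measurable_fst measurable_fst hf.measurable rfl P
  have hsnd : (P.map (Prod.map f g)).map Prod.snd = (P.map Prod.snd).map g :=
    measure_map_comm hfg.measurable measurable_snd measurable_snd hg.measurable rfl P
  unfold mutualInfo
  rw [hfst, hsnd, Measure.map_prod_map _ _ hf.measurable hg.measurable,
    klDiv_map_of_measurableEmbedding hfg]

section Triple

variable {X₁ X₂ Y X₁' X₂' Y' : Type*}
  [MeasurableSpace X₁] [MeasurableSpace X₂] [MeasurableSpace Y]
  [MeasurableSpace X₁'] [MeasurableSpace X₂'] [MeasurableSpace Y']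
  {f₁ : X₁ → X₁'} {f₂ : X₂ → X₂'} {fY : Y → Y'}

theorem mi₁₂Y_map_prodMap (hf₁ : MeasurableEmbedding f₁) (hf₂ : MeasurableEmbedding f₂)
    (hfY : MeasurableEmbedding fY) (q : Measure (X₁ × X₂ × Y)) [IsFiniteMeasure q] :
    mi₁₂Y (q.map (Prod.map f₁ (Prod.map f₂ fY))) = mi₁₂Y q := by
  have hassoc : (q.map (Prod.map f₁ (Prod.map f₂ fY))).map (fun z => ((z.1, z.2.1), z.2.2))
      = (q.map fun z => ((z.1, z.2.1), z.2.2)).map (Prod.map (Prod.map f₁ f₂) fY) :=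
    measure_map_comm (hf₁.prodMap (hf₂.prodMap hfY)).measurable (by fun_prop)
      (by fun_prop) ((hf₁.prodMap hf₂).prodMap hfY).measurable rfl q
  unfold mi₁₂Y
  rw [hassoc, mutualInfo_map_prodMap (hf₁.prodMap hf₂) hfY]

theorem map_prodMap_map_fst_snd_snd (hf₁ : Measurable f₁) (hf₂ : Measurable f₂)
    (hfY : Measurable fY) (q : Measure (X₁ × X₂ × Y)) :
    (q.map (Prod.map f₁ (Prod.map f₂ fY))).map (fun z => (z.1, z.2.2))
      = (q.map fun z => (z.1, z.2.2)).map (Prod.map f₁ fY) :=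
  measure_map_comm (hf₁.prodMap (hf₂.prodMap hfY)) (by fun_prop) (by fun_prop)
    (hf₁.prodMap hfY) rfl q

theorem map_prodMap_map_snd_fst_snd_snd (hf₁ : Measurable f₁) (hf₂ : Measurable f₂)
    (hfY : Measurable fY) (q : Measure (X₁ × X₂ × Y)) :
    (q.map (Prod.map f₁ (Prod.map f₂ fY))).map (fun z => (z.2.1, z.2.2))
      = (q.map fun z => (z.2.1, z.2.2)).map (Prod.map f₂ fY) :=
  measure_map_comm (hf₁.prodMap (hf₂.prodMap hfY)) (by fun_prop) (by fun_prop)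
    (hf₂.prodMap hfY) rfl q

theorem map_prodMap_mem_marginalSet_iff (hf₁ : MeasurableEmbedding f₁)
    (hf₂ : MeasurableEmbedding f₂) (hfY : MeasurableEmbedding fY) {p q : Measure (X₁ × X₂ × Y)} :
    q.map (Prod.map f₁ (Prod.map f₂ fY)) ∈ marginalSet (p.map (Prod.map f₁ (Prod.map f₂ fY)))
      ↔ q ∈ marginalSet p := by
  have hF := (hf₁.prodMap (hf₂.prodMap hfY)).measurable
  simp only [marginalSet, mem_ofPred_eq, Measure.isProbabilityMeasure_map_iff hF.aemeasurable,
    map_prodMap_map_fst_snd_snd hf₁.measurable hf₂.measurable hfY.measurable,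
    map_prodMap_map_snd_fst_snd_snd hf₁.measurable hf₂.measurable hfY.measurable,
    (hf₁.prodMap hfY).map_injective.eq_iff, (hf₂.prodMap hfY).map_injective.eq_iff]

theorem ae_mem_range_prodMap_of_mem_marginalSet (hf₁ : MeasurableEmbedding f₁)
    (hf₂ : MeasurableEmbedding f₂) (hfY : MeasurableEmbedding fY) {p : Measure (X₁ × X₂ × Y)}
    {q' : Measure (X₁' × X₂' × Y')}
    (hq' : q' ∈ marginalSet (p.map (Prod.map f₁ (Prod.map f₂ fY)))) :
    ∀ᵐ z ∂q', z ∈ range (Prod.map f₁ (Prod.map f₂ fY)) := by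
  obtain ⟨-, h₁, h₂⟩ := hq'
  rw [map_prodMap_map_fst_snd_snd hf₁.measurable hf₂.measurable hfY.measurable] at h₁
  rw [map_prodMap_map_snd_fst_snd_snd hf₁.measurable hf₂.measurable hfY.measurable] at h₂
  have h₁Y : ∀ᵐ z ∂q', (z.1, z.2.2) ∈ range (Prod.map f₁ fY) := by
    refine ae_of_ae_map (Measurable.aemeasurable (by fun_prop)) ?_
    rw [h₁]
    exact ae_map_mem_range _ (hf₁.prodMap hfY).measurableSet_range _
  have h₂Y : ∀ᵐ z ∂q', z.2 ∈ range (Prod.map f₂ fY) := by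
    refine ae_of_ae_map (Measurable.aemeasurable (by fun_prop)) ?_
    rw [h₂]
    exact ae_map_mem_range _ (hf₂.prodMap hfY).measurableSet_range _
  filter_upwards [h₁Y, h₂Y] with z hz₁ hz₂
  rw [range_prodMap] at hz₁ ⊢
  exact ⟨hz₁.1, hz₂⟩

theorem image_map_marginalSet (hf₁ : MeasurableEmbedding f₁) (hf₂ : MeasurableEmbedding f₂)
    (hfY : MeasurableEmbedding fY) (p : Measure (X₁ × X₂ × Y)) :
    Measure.map (Prod.map f₁ (Prod.map f₂ fY)) '' marginalSet p
      = marginalSet (p.map (Prod.map f₁ (Prod.map f₂ fY))) := by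
  refine Subset.antisymm (image_subset_iff.2 fun q hq =>
    (map_prodMap_mem_marginalSet_iff hf₁ hf₂ hfY).2 hq) fun q' hq' => ?_
  have hmap : (q'.comap (Prod.map f₁ (Prod.map f₂ fY))).map (Prod.map f₁ (Prod.map f₂ fY))
      = q' := by
    rw [(hf₁.prodMap (hf₂.prodMap hfY)).map_comap, Measure.restrict_eq_self_of_ae_mem
      (ae_mem_range_prodMap_of_mem_marginalSet hf₁ hf₂ hfY hq')]
  exact ⟨_, (map_prodMap_mem_marginalSet_iff hf₁ hf₂ hfY).1 (hmap.symm ▸ hq'), hmap⟩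

theorem iInf_mi₁₂Y_invariant_of_measurableEquiv_general (p : Measure (X₁ × X₂ × Y))
    (hf₁ : MeasurableEmbedding f₁) (hf₂ : MeasurableEmbedding f₂) (hfY : MeasurableEmbedding fY) :
    (⨅ q ∈ marginalSet p, mi₁₂Y q)
      = ⨅ q ∈ marginalSet (p.map (Prod.map f₁ (Prod.map f₂ fY))), mi₁₂Y q := by
  rw [← image_map_marginalSet hf₁ hf₂ hfY, iInf_image]
  refine biInf_congr fun q hq => ?_
  have : IsProbabilityMeasure q := hq.1
  exact (mi₁₂Y_map_prodMap hf₁ hf₂ hfY q).symm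

end Triple

/-- **Invariance of the PID synergy optimization under componentwise measurable
equivalences** (Corollary 4.2): with `p̂ := (f₁ × f₂ × f_Y)_* p`,
`inf_{q ∈ Δ_p} I₍₁₂₎,Y(q) = inf_{q̂ ∈ Δ_{p̂}} I₍₁₂₎,Y(q̂)`. -/
theorem iInf_mi₁₂Y_invariant_of_measurableEquiv
    {X₁ X₂ Y X₁' X₂' Y' : Type*}
    [MeasurableSpace X₁] [MeasurableSpace X₂] [MeasurableSpace Y]
    [MeasurableSpace X₁'] [MeasurableSpace X₂'] [MeasurableSpace Y']
    (p : Measure (X₁ × X₂ × Y)) [IsProbabilityMeasure p]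
    (f₁ : X₁ ≃ᵐ X₁') (f₂ : X₂ ≃ᵐ X₂') (fY : Y ≃ᵐ Y') :
    (⨅ q ∈ marginalSet p, mi₁₂Y q)
      = ⨅ q ∈ marginalSet (p.map (f₁.prodCongr (f₂.prodCongr fY))), mi₁₂Y q := by
  exact iInf_mi₁₂Y_invariant_of_measurableEquiv_general p f₁.measurableEmbedding
    f₂.measurableEmbedding fY.measurableEmbedding
end

section
/- Product-of-marginals relative entropy bound (step in the proof of Corollary 4.3): let P and Q be probability measures on a product measurable space α × β with P absolutely continuous with respect to Q. Then KL(P₁ ⊗ P₂ ‖ Q₁ ⊗ Q₂) ≤ 2 · KL(P ‖ Q), where P₁, P₂ (resp. Q₁, Q₂) are the marginals of P (resp. Q) on α and β. -/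
/-!
For probability measures the divergence is additive over products, so the product of two marginals
costs the sum of the divergences of the marginals, and by the data processing inequality each of
these is at most the divergence of the joint laws. Additivity is the chain rule for a product viewed
as the composition of its first factor with a constant kernel: the conditional divergence is then
that of the second factors.
-/

open MeasureTheory

open ProbabilityTheory

section Product

variable {α β : Type*} [MeasurableSpace α] [MeasurableSpace β]

lemma informationTheory_klDiv_prod_right (μ ν : Measure α) (ρ : Measure β)
    [IsFiniteMeasure μ] [IsFiniteMeasure ν] [IsProbabilityMeasure ρ] :
    InformationTheory.klDiv (μ.prod ρ) (ν.prod ρ) = InformationTheory.klDiv μ ν := by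
  simp only [← Measure.compProd_const, InformationTheory.klDiv_compProd_left]

lemma informationTheory_klDiv_prod_swap (μ₁ ν₁ : Measure α) (μ₂ ν₂ : Measure β)
    [IsFiniteMeasure μ₁] [IsFiniteMeasure ν₁] [IsFiniteMeasure μ₂] [IsFiniteMeasure ν₂] :
    InformationTheory.klDiv (μ₂.prod μ₁) (ν₂.prod ν₁)
      = InformationTheory.klDiv (μ₁.prod μ₂) (ν₁.prod ν₂) := by
  apply le_antisymm
  · simpa only [Measure.prod_swap] using
      InformationTheory.klDiv_map_le (μ₁.prod μ₂) (ν₁.prod ν₂) measurable_swap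
  · simpa only [Measure.prod_swap] using
      InformationTheory.klDiv_map_le (μ₂.prod μ₁) (ν₂.prod ν₁) measurable_swap

lemma informationTheory_klDiv_prod_left (ρ : Measure α) (μ ν : Measure β)
    [IsProbabilityMeasure ρ] [IsFiniteMeasure μ] [IsFiniteMeasure ν] :
    InformationTheory.klDiv (ρ.prod μ) (ρ.prod ν) = InformationTheory.klDiv μ ν := by
  rw [informationTheory_klDiv_prod_swap, informationTheory_klDiv_prod_right]

lemma informationTheory_klDiv_prod_eq_add (μ₁ ν₁ : Measure α) (μ₂ ν₂ : Measure β)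
    [IsProbabilityMeasure μ₁] [IsFiniteMeasure ν₁]
    [IsProbabilityMeasure μ₂] [IsProbabilityMeasure ν₂] :
    InformationTheory.klDiv (μ₁.prod μ₂) (ν₁.prod ν₂)
      = InformationTheory.klDiv μ₁ ν₁ + InformationTheory.klDiv μ₂ ν₂ :=
  calc InformationTheory.klDiv (μ₁.prod μ₂) (ν₁.prod ν₂)
    _ = InformationTheory.klDiv μ₁ ν₁
        + InformationTheory.klDiv (μ₁.prod μ₂) (μ₁.prod ν₂) := by
      simpa only [Measure.compProd_const] using
        InformationTheory.klDiv_compProd_eq_add μ₁ ν₁ (Kernel.const α μ₂) (Kernel.const α ν₂)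
    _ = InformationTheory.klDiv μ₁ ν₁ + InformationTheory.klDiv μ₂ ν₂ := by
      rw [informationTheory_klDiv_prod_left]

end Product

/-- Mathlib's divergence adds the correction `ν univ - μ univ` to the integral; `klDiv` does not. -/
lemma klDiv_eq_coe_informationTheory_klDiv {α : Type*} [MeasurableSpace α] {μ ν : Measure α}
    [IsFiniteMeasure μ] [IsFiniteMeasure ν] (h_univ : μ Set.univ = ν Set.univ) :
    klDiv μ ν = (InformationTheory.klDiv μ ν : EReal) := by
  by_cases h : μ ≪ ν ∧ Integrable (llr μ ν) μ
  · calc klDiv μ ν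
      _ = ((∫ x, llr μ ν x ∂μ : ℝ) : EReal) := if_pos h
      _ = ((InformationTheory.klDiv μ ν).toReal : EReal) := by
        rw [InformationTheory.toReal_klDiv_of_measure_eq h.1 h_univ]
      _ = (InformationTheory.klDiv μ ν : EReal) :=
        EReal.coe_ennreal_toReal (InformationTheory.klDiv_ne_top h.1 h.2)
  · calc klDiv μ ν
      _ = ⊤ := if_neg h
      _ = (InformationTheory.klDiv μ ν : EReal) := by
        rw [InformationTheory.klDiv_eq_top_iff.mpr (not_and.mp h), EReal.coe_ennreal_top]

theorem klDiv_prod_marginals_le_two_mul_klDiv_general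
    {Ω α β : Type*} [MeasurableSpace Ω] [MeasurableSpace α] [MeasurableSpace β]
    (P Q : Measure Ω) [IsProbabilityMeasure P] [IsProbabilityMeasure Q]
    {X : Ω → α} {Y : Ω → β} (hX : Measurable X) (hY : Measurable Y) :
    klDiv ((P.map X).prod (P.map Y)) ((Q.map X).prod (Q.map Y)) ≤ 2 * klDiv P Q := by
  have (R : Measure Ω) [IsProbabilityMeasure R] : IsProbabilityMeasure (R.map X) :=
    Measure.isProbabilityMeasure_map hX.aemeasurable
  have (R : Measure Ω) [IsProbabilityMeasure R] : IsProbabilityMeasure (R.map Y) :=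
    Measure.isProbabilityMeasure_map hY.aemeasurable
  have h_le : InformationTheory.klDiv ((P.map X).prod (P.map Y)) ((Q.map X).prod (Q.map Y))
      ≤ 2 * InformationTheory.klDiv P Q := by
    rw [informationTheory_klDiv_prod_eq_add, two_mul]
    exact add_le_add (InformationTheory.klDiv_map_le P Q hX) (InformationTheory.klDiv_map_le P Q hY)
  calc klDiv ((P.map X).prod (P.map Y)) ((Q.map X).prod (Q.map Y))
    _ = (InformationTheory.klDiv ((P.map X).prod (P.map Y)) ((Q.map X).prod (Q.map Y)) : EReal) :=
      klDiv_eq_coe_informationTheory_klDiv (by simp only [measure_univ])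
    _ ≤ ((2 * InformationTheory.klDiv P Q : ENNReal) : EReal) :=
      EReal.coe_ennreal_le_coe_ennreal_iff.mpr h_le
    _ = 2 * (InformationTheory.klDiv P Q : EReal) := EReal.coe_ennreal_mul 2 _
    _ = 2 * klDiv P Q := by
      rw [klDiv_eq_coe_informationTheory_klDiv (by simp only [measure_univ])]

/-- **Product-of-marginals relative entropy bound** (step in the proof of Corollary 4.3):
if `P ≪ Q` on a product space, then `KL(P₁ ⊗ P₂ ‖ Q₁ ⊗ Q₂) ≤ 2 · KL(P ‖ Q)`. -/
theorem klDiv_prod_marginals_le_two_mul_klDiv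
    {α β : Type*} [MeasurableSpace α] [MeasurableSpace β]
    (P Q : Measure (α × β)) [IsProbabilityMeasure P] [IsProbabilityMeasure Q]
    (hac : P ≪ Q) :
    klDiv ((P.map Prod.fst).prod (P.map Prod.snd))
        ((Q.map Prod.fst).prod (Q.map Prod.snd))
      ≤ 2 * klDiv P Q := by
  exact klDiv_prod_marginals_le_two_mul_klDiv_general P Q measurable_fst measurable_snd
end

section
/- Determinant formula for the mutual information of a jointly Gaussian vector: let Σ be a positive definite real (d_X + d_Y) × (d_X + d_Y) matrix with diagonal blocks Σ_X (size d_X × d_X) and Σ_Y (size d_Y × d_Y), and let P = N(0, Σ) be the centered multivariate Gaussian measure on ℝ^{d_X} × ℝ^{d_Y} with covariance Σ. Then the mutual information between the two coordinate blocks satisfies I(P) = (1/2) · log( det Σ_X · det Σ_Y / det Σ ). -/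
/-!
For `P = N(m, S)` with diagonal blocks `S₁₁`, `S₂₂`, the product of the marginals is again Gaussian,
namely `N(m, T)` with `T = diag(S₁₁, S₂₂)`, so the mutual information is a divergence between two
Gaussian measures on the same space. The log-likelihood ratio of two Gaussians is a constant plus a
difference of quadratic forms, and the mean of a quadratic form only involves the mean and the
covariance of the random vector. This gives

  `KL(N(m, S) ‖ N(m', T)) = 1/2 (log (det T / det S) + tr (T⁻¹ S) - d + (m - m')ᵀ T⁻¹ (m - m'))`.

Here `m = m'`, and the diagonal blocks of `T⁻¹ S` are identity matrices, so `tr (T⁻¹ S) = d` and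
only `1/2 log (det S₁₁ det S₂₂ / det S)` survives.

The moments and marginals of `mvGaussian`, which is defined by a density, come from identifying it
with Mathlib's `multivariateGaussian`: both are the image of the standard Gaussian under the map
`x ↦ m + S^(1/2) x`.
-/

open MeasureTheory Matrix

/-- The multivariate Gaussian measure `N(m, S)` on `ι → ℝ`, defined by its density
with respect to Lebesgue measure (the genuine Gaussian measure when `S` is positive
definite). -/
noncomputable def mvGaussian {ι : Type*} [Fintype ι] [DecidableEq ι]
    (m : ι → ℝ) (S : Matrix ι ι ℝ) : Measure (ι → ℝ) :=
  volume.withDensity fun x =>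
    ENNReal.ofReal ((Real.sqrt ((2 * Real.pi) ^ (Fintype.card ι) * S.det))⁻¹ *
      Real.exp (-(1/2) * ((x - m) ⬝ᵥ (S⁻¹ *ᵥ (x - m)))))

open ProbabilityTheory WithLp
open scoped MatrixOrder RealInnerProductSpace

section KullbackLeibler

variable {α β : Type*} [MeasurableSpace α] [MeasurableSpace β]

theorem klDiv_map_measurableEquiv (P Q : Measure α) [SigmaFinite P] [SigmaFinite Q]
    (e : α ≃ᵐ β) : klDiv (P.map e) (Q.map e) = klDiv P Q := by
  have hac : P.map e ≪ Q.map e ↔ P ≪ Q :=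
    ⟨fun h => by simpa using h.map e.symm.measurable, fun h => h.map e.measurable⟩
  by_cases hPQ : P ≪ Q
  · have hlog : (fun x => Real.log ((P.map e).rnDeriv (Q.map e) (e x)).toReal) =ᵐ[P]
        fun x => Real.log (P.rnDeriv Q x).toReal := by
      filter_upwards [hPQ.ae_le (e.measurableEmbedding.rnDeriv_map P Q)] with x hx
      rw [hx]
    classical
    refine if_congr (and_congr hac ?_) ?_ rfl
    · rw [integrable_map_equiv]
      exact integrable_congr hlog
    · rw [integral_map_equiv, integral_congr_ae hlog]
  · rw [klDiv, klDiv, if_neg fun h => hPQ (hac.1 h.1), if_neg fun h => hPQ h.1]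

theorem klDiv_withDensity_ofReal_left (Q : Measure α) [SigmaFinite Q] {f : α → ℝ}
    (hf : Measurable f) (hf0 : ∀ x, 0 ≤ f x)
    (hint : Integrable (fun x => Real.log (f x)) (Q.withDensity fun x => ENNReal.ofReal (f x))) :
    klDiv (Q.withDensity fun x => ENNReal.ofReal (f x)) Q =
      ((∫ x, Real.log (f x) ∂Q.withDensity fun x => ENNReal.ofReal (f x) : ℝ) : EReal) := by
  set P := Q.withDensity fun x => ENNReal.ofReal (f x)
  have hac : P ≪ Q := withDensity_absolutelyContinuous _ _
  have hlog : (fun x => Real.log (P.rnDeriv Q x).toReal) =ᵐ[P] fun x => Real.log (f x) := by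
    filter_upwards [hac.ae_le (Measure.rnDeriv_withDensity Q hf.ennreal_ofReal)] with x hx
    rw [hx, ENNReal.toReal_ofReal (hf0 x)]
  rw [klDiv, if_pos ⟨hac, hint.congr hlog.symm⟩, integral_congr_ae hlog]

theorem withDensity_ofReal_withDensity_ofReal_div (μ : Measure α) {p q : α → ℝ}
    (hp : Measurable p) (hq : Measurable q) (hq0 : ∀ x, 0 < q x) :
    (μ.withDensity fun x => ENNReal.ofReal (q x)).withDensity
        (fun x => ENNReal.ofReal (p x / q x)) =
      μ.withDensity fun x => ENNReal.ofReal (p x) := by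
  have hpq : Measurable fun x => ENNReal.ofReal (p x / q x) := (hp.div hq).ennreal_ofReal
  rw [← withDensity_mul _ hq.ennreal_ofReal hpq]
  congr 1 with x
  rw [Pi.mul_apply, ← ENNReal.ofReal_mul (hq0 x).le, mul_div_cancel₀ _ (hq0 x).ne']

theorem klDiv_withDensity_ofReal (μ : Measure α) [SigmaFinite μ] {p q : α → ℝ}
    (hp : Measurable p) (hq : Measurable q) (hp0 : ∀ x, 0 ≤ p x) (hq0 : ∀ x, 0 < q x)
    (hint : Integrable (fun x => Real.log (p x / q x))
      (μ.withDensity fun x => ENNReal.ofReal (p x))) :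
    klDiv (μ.withDensity fun x => ENNReal.ofReal (p x))
        (μ.withDensity fun x => ENNReal.ofReal (q x)) =
      ((∫ x, Real.log (p x / q x) ∂μ.withDensity fun x => ENNReal.ofReal (p x) : ℝ) : EReal) := by
  have hσ : SigmaFinite (μ.withDensity fun x => ENNReal.ofReal (q x)) :=
    SigmaFinite.withDensity_ofReal q
  rw [← withDensity_ofReal_withDensity_ofReal_div μ hp hq hq0] at hint ⊢
  exact klDiv_withDensity_ofReal_left _ (hp.div hq) (fun x => div_nonneg (hp0 x) (hq0 x).le) hint

end KullbackLeibler

section Density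

variable {α β : Type*} [MeasurableSpace α] [MeasurableSpace β]

theorem map_withDensity_comp (μ : Measure α) {f : α → β} (hf : Measurable f) {g : β → ENNReal}
    (hg : Measurable g) :
    (μ.withDensity fun x => g (f x)).map f = (μ.map f).withDensity g := by
  ext s hs
  rw [Measure.map_apply hf hs, withDensity_apply _ (hf hs), withDensity_apply _ hs,
    setLIntegral_map hs hg hf]

theorem pi_withDensity_ofReal {ι : Type*} [Fintype ι] {X : ι → Type*}
    [∀ i, MeasurableSpace (X i)] (μ : ∀ i, Measure (X i)) [∀ i, SigmaFinite (μ i)]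
    {f : ∀ i, X i → ℝ} (hf : ∀ i, Integrable (f i) (μ i)) (hf0 : ∀ i x, 0 ≤ f i x) :
    Measure.pi (fun i => (μ i).withDensity fun x => ENNReal.ofReal (f i x)) =
      (Measure.pi μ).withDensity fun x => ENNReal.ofReal (∏ i, f i (x i)) := by
  have hσ (i : ι) : SigmaFinite ((μ i).withDensity fun x => ENNReal.ofReal (f i x)) :=
    SigmaFinite.withDensity_ofReal (f i)
  refine Measure.pi_eq fun s hs => ?_
  have hfs (i : ι) : Integrable (f i) ((μ i).restrict (s i)) := (hf i).restrict
  calc ((Measure.pi μ).withDensity fun x => ENNReal.ofReal (∏ i, f i (x i))) (Set.univ.pi s)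
    _ = ENNReal.ofReal (∫ x, ∏ i, f i (x i) ∂Measure.pi fun i => (μ i).restrict (s i)) := by
      rw [withDensity_apply _ (MeasurableSet.univ_pi hs), Measure.restrict_pi_pi,
        ofReal_integral_eq_lintegral_ofReal (.fintype_prod_dep hfs)
          (.of_forall fun x => Finset.prod_nonneg fun i _ => hf0 i (x i))]
    _ = ∏ i, ENNReal.ofReal (∫ x in s i, f i x ∂μ i) := by
      rw [integral_fintype_prod_eq_prod,
        ENNReal.ofReal_prod_of_nonneg fun i _ => integral_nonneg (hf0 i)]
    _ = ∏ i, ((μ i).withDensity fun x => ENNReal.ofReal (f i x)) (s i) := by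
      refine Finset.prod_congr rfl fun i _ => ?_
      rw [withDensity_apply _ (hs i),
        ofReal_integral_eq_lintegral_ofReal (hfs i) (.of_forall (hf0 i))]

end Density

section Gaussian

variable {ι κ : Type*} [Fintype ι] [DecidableEq ι] [Fintype κ] [DecidableEq κ]

/-- The density of `mvGaussian m S` with respect to Lebesgue measure, as a real-valued function;
the multivariate analogue of `gaussianPDFReal`. -/
noncomputable def mvGaussianPDFReal (m : ι → ℝ) (S : Matrix ι ι ℝ) (x : ι → ℝ) : ℝ :=
  (Real.sqrt ((2 * Real.pi) ^ Fintype.card ι * S.det))⁻¹ *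
    Real.exp (-(1 / 2) * ((x - m) ⬝ᵥ (S⁻¹ *ᵥ (x - m))))

theorem mvGaussian_eq_withDensity (m : ι → ℝ) (S : Matrix ι ι ℝ) :
    mvGaussian m S = volume.withDensity fun x => ENNReal.ofReal (mvGaussianPDFReal m S x) :=
  rfl

instance sigmaFinite_mvGaussian (m : ι → ℝ) (S : Matrix ι ι ℝ) : SigmaFinite (mvGaussian m S) :=
  SigmaFinite.withDensity_ofReal (mvGaussianPDFReal m S)

theorem measurable_mvGaussianPDFReal (m : ι → ℝ) (S : Matrix ι ι ℝ) :
    Measurable (mvGaussianPDFReal m S) :=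
  Continuous.measurable (by unfold mvGaussianPDFReal; fun_prop)

theorem mvGaussianPDFReal_pos (m : ι → ℝ) {S : Matrix ι ι ℝ} (hS : 0 < S.det) (x : ι → ℝ) :
    0 < mvGaussianPDFReal m S x := by
  unfold mvGaussianPDFReal; positivity

theorem log_mvGaussianPDFReal (m : ι → ℝ) {S : Matrix ι ι ℝ} (hS : 0 < S.det) (x : ι → ℝ) :
    Real.log (mvGaussianPDFReal m S x) =
      -(1 / 2) * (Fintype.card ι * Real.log (2 * Real.pi) + Real.log S.det +
        (x - m) ⬝ᵥ (S⁻¹ *ᵥ (x - m))) := by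
  have hpi : (0 : ℝ) < (2 * Real.pi) ^ Fintype.card ι := by positivity
  rw [mvGaussianPDFReal, Real.log_mul (by positivity) (by positivity), Real.log_exp, Real.log_inv,
    Real.log_sqrt (by positivity), Real.log_mul hpi.ne' hS.ne', Real.log_pow]
  ring

theorem mvGaussianPDFReal_diagonal (m : ι → ℝ) {v : ι → NNReal} (hv : ∀ i, v i ≠ 0) (x : ι → ℝ) :
    mvGaussianPDFReal m (diagonal fun i => (v i : ℝ)) x =
      ∏ i, gaussianPDFReal (m i) (v i) (x i) := by
  have hinv : (diagonal fun i => (v i : ℝ))⁻¹ = diagonal fun i => (v i : ℝ)⁻¹ := by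
    refine inv_eq_right_inv ?_
    simp [diagonal_mul_diagonal, hv]
  simp only [mvGaussianPDFReal, gaussianPDFReal, hinv, det_diagonal, Finset.prod_mul_distrib,
    ← Real.exp_sum, Finset.prod_inv_distrib]
  rw [← Real.sqrt_prod _ fun i _ => by positivity, Finset.prod_mul_distrib, Finset.prod_const,
    Finset.card_univ]
  congr 2
  simp only [dotProduct, mulVec_diagonal, Finset.mul_sum]
  refine Finset.sum_congr rfl fun i _ => ?_
  have hvi := hv i
  simp only [Pi.sub_apply]
  field_simp

theorem pi_gaussianReal_eq_mvGaussian (m : ι → ℝ) {v : ι → NNReal} (hv : ∀ i, v i ≠ 0) :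
    Measure.pi (fun i => gaussianReal (m i) (v i)) =
      mvGaussian m (diagonal fun i => (v i : ℝ)) := by
  simp only [mvGaussian_eq_withDensity, mvGaussianPDFReal_diagonal m hv, volume_pi,
    gaussianReal_of_var_ne_zero _ (hv _), gaussianPDF_def]
  exact pi_withDensity_ofReal _ (fun i => integrable_gaussianPDFReal _ _)
    fun i => gaussianPDFReal_nonneg _ _

theorem mulVec_dotProduct_inv_mulVec {A : Matrix ι ι ℝ} (hA : A.det ≠ 0) (S : Matrix ι ι ℝ)
    (x : ι → ℝ) : (A *ᵥ x) ⬝ᵥ ((A * S * Aᵀ)⁻¹ *ᵥ (A *ᵥ x)) = x ⬝ᵥ (S⁻¹ *ᵥ x) := by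
  have hAu : IsUnit A.det := hA.isUnit
  rw [Matrix.mul_inv_rev, Matrix.mul_inv_rev, mulVec_mulVec, Matrix.mul_assoc, Matrix.mul_assoc,
    nonsing_inv_mul _ hAu, Matrix.mul_one, ← mulVec_mulVec, ← transpose_nonsing_inv,
    dotProduct_mulVec, vecMul_transpose, mulVec_mulVec, nonsing_inv_mul _ hAu, one_mulVec]

theorem mvGaussianPDFReal_add_mulVec {A : Matrix ι ι ℝ} (hA : A.det ≠ 0) (b m : ι → ℝ)
    (S : Matrix ι ι ℝ) (x : ι → ℝ) :
    |A.det| * mvGaussianPDFReal (b + A *ᵥ m) (A * S * Aᵀ) (b + A *ᵥ x) =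
      mvGaussianPDFReal m S x := by
  have hdet : (2 * Real.pi) ^ Fintype.card ι * (A * S * Aᵀ).det =
      A.det ^ 2 * ((2 * Real.pi) ^ Fintype.card ι * S.det) := by
    rw [det_mul, det_mul, det_transpose]; ring
  have : 0 < |A.det| := abs_pos.2 hA
  rw [mvGaussianPDFReal, mvGaussianPDFReal, hdet, Real.sqrt_mul (sq_nonneg _), Real.sqrt_sq_eq_abs,
    add_sub_add_left_eq_sub, ← mulVec_sub, mulVec_dotProduct_inv_mulVec hA]
  field_simp

theorem map_add_mulVec_volume {A : Matrix ι ι ℝ} (hA : A.det ≠ 0) (b : ι → ℝ) :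
    (volume : Measure (ι → ℝ)).map (fun x => b + A *ᵥ x) = ENNReal.ofReal |A.det|⁻¹ • volume := by
  have hcomp : (fun x => b + A *ᵥ x) = (b + ·) ∘ toLin' A := rfl
  rw [hcomp, ← Measure.map_map (measurable_const_add b) (by fun_prop),
    Real.map_matrix_volume_pi_eq_smul_volume_pi hA, Measure.map_smul, map_add_left_eq_self, abs_inv]

theorem map_add_mulVec_mvGaussian {A : Matrix ι ι ℝ} (hA : A.det ≠ 0) (b m : ι → ℝ)
    (S : Matrix ι ι ℝ) :
    (mvGaussian m S).map (fun x => b + A *ᵥ x) = mvGaussian (b + A *ᵥ m) (A * S * Aᵀ) := by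
  have hpdf := (measurable_mvGaussianPDFReal (b + A *ᵥ m) (A * S * Aᵀ)).ennreal_ofReal
  simp only [mvGaussian_eq_withDensity m S, ← mvGaussianPDFReal_add_mulVec hA b m S,
    ENNReal.ofReal_mul (abs_nonneg A.det)]
  rw [map_withDensity_comp volume (f := fun x => b + A *ᵥ x) (by fun_prop)
      (hpdf.const_mul (ENNReal.ofReal |A.det|)),
    map_add_mulVec_volume hA, withDensity_smul_measure, ← withDensity_smul _ (hpdf.const_mul _),
    mvGaussian_eq_withDensity]
  congr 1 with x
  rw [Pi.smul_apply, smul_eq_mul, ← mul_assoc, ← ENNReal.ofReal_mul (by positivity),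
    inv_mul_cancel₀ (abs_ne_zero.2 hA), ENNReal.ofReal_one, one_mul]

theorem sqrt_mul_transpose_sqrt {S : Matrix ι ι ℝ} (hS : S.PosSemidef) :
    CFC.sqrt S * (CFC.sqrt S)ᵀ = S := by
  have hsymm : (CFC.sqrt S)ᵀ = CFC.sqrt S := by
    simpa [star_eq_conjTranspose] using (CFC.sqrt_nonneg S).isSelfAdjoint.star_eq
  rw [hsymm, CFC.sqrt_mul_sqrt_self _ hS.nonneg]

theorem det_sqrt_ne_zero {S : Matrix ι ι ℝ} (hS : S.PosDef) : (CFC.sqrt S).det ≠ 0 := by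
  have hdet : (CFC.sqrt S).det * (CFC.sqrt S).det = S.det := by
    rw [← det_mul, CFC.sqrt_mul_sqrt_self _ hS.posSemidef.nonneg]
  exact left_ne_zero_of_mul (hdet ▸ hS.det_pos.ne')

theorem mvGaussian_eq_map_multivariateGaussian (m : ι → ℝ) {S : Matrix ι ι ℝ} (hS : S.PosDef) :
    mvGaussian m S = (multivariateGaussian (toLp 2 m) S).map ofLp := by
  have hstd : mvGaussian 0 1 = Measure.pi fun _ : ι => gaussianReal 0 1 := by
    simpa using (pi_gaussianReal_eq_mvGaussian (0 : ι → ℝ) (v := 1) fun _ => one_ne_zero).symm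
  calc mvGaussian m S
    _ = (mvGaussian 0 1).map fun x => m + CFC.sqrt S *ᵥ x := by
      rw [map_add_mulVec_mvGaussian (det_sqrt_ne_zero hS), mulVec_zero, add_zero,
        Matrix.mul_one, sqrt_mul_transpose_sqrt hS.posSemidef]
    _ = (multivariateGaussian (toLp 2 m) S).map ofLp := by
      rw [hstd, multivariateGaussian, ← map_pi_eq_stdGaussian,
        Measure.map_map (by fun_prop) (by fun_prop), Measure.map_map (by fun_prop) (by fun_prop)]
      congr 1 with x i

theorem isGaussian_mvGaussian (m : ι → ℝ) {S : Matrix ι ι ℝ} (hS : S.PosDef) :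
    IsGaussian (mvGaussian m S) := by
  rw [mvGaussian_eq_map_multivariateGaussian m hS]
  exact isGaussian_map_equiv (EuclideanSpace.equiv ι ℝ)

theorem map_mulVec_multivariateGaussian (μ : EuclideanSpace ℝ ι) {S : Matrix ι ι ℝ}
    (hS : S.PosSemidef) (A : Matrix κ ι ℝ) :
    (multivariateGaussian μ S).map (fun x => toLp 2 (A *ᵥ ofLp x)) =
      multivariateGaussian (toLp 2 (A *ᵥ ofLp μ)) (A * S * Aᵀ) := by
  have hadj (x : EuclideanSpace ℝ ι) (t : EuclideanSpace ℝ κ) :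
      ⟪toLp 2 (A *ᵥ ofLp x), t⟫ = ⟪x, toLp 2 (Aᵀ *ᵥ ofLp t)⟫ := by
    simp [EuclideanSpace.inner_eq_star_dotProduct, dotProduct_mulVec, dotProduct_comm,
      mulVec_transpose]
  have hAS : (A * S * Aᵀ).PosSemidef := by simpa using hS.mul_mul_conjTranspose_same A
  refine Measure.ext_of_charFun (funext fun t => ?_)
  calc charFun ((multivariateGaussian μ S).map fun x => toLp 2 (A *ᵥ ofLp x)) t
    _ = charFun (multivariateGaussian μ S) (toLp 2 (Aᵀ *ᵥ ofLp t)) := by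
      rw [charFun_apply, charFun_apply, integral_map (by fun_prop) (by fun_prop)]
      simp only [hadj]
    _ = charFun (multivariateGaussian (toLp 2 (A *ᵥ ofLp μ)) (A * S * Aᵀ)) t := by
      rw [charFun_multivariateGaussian hS, charFun_multivariateGaussian hAS,
        real_inner_comm, ← hadj, real_inner_comm, mulVec_transpose, ← dotProduct_mulVec,
        mulVec_mulVec, ← mulVec_transpose, mulVec_mulVec, Matrix.mul_assoc]

theorem map_comp_mvGaussian (m : ι → ℝ) {S : Matrix ι ι ℝ} (hS : S.PosDef) {f : κ → ι}
    (hf : Function.Injective f) :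
    (mvGaussian m S).map (· ∘ f) = mvGaussian (m ∘ f) (S.submatrix f f) := by
  have hmulVec (x : ι → ℝ) : (1 : Matrix ι ι ℝ).submatrix f id *ᵥ x = x ∘ f := by
    ext k; simp [mulVec, dotProduct, one_apply]
  have hmul : (1 : Matrix ι ι ℝ).submatrix f id * S * ((1 : Matrix ι ι ℝ).submatrix f id)ᵀ =
      S.submatrix f f := by
    ext k l; simp [mul_apply, one_apply]
  have hmap := map_mulVec_multivariateGaussian (toLp 2 m) hS.posSemidef
    ((1 : Matrix ι ι ℝ).submatrix f id)
  simp only [hmulVec, hmul] at hmap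
  rw [mvGaussian_eq_map_multivariateGaussian m hS,
    mvGaussian_eq_map_multivariateGaussian (m ∘ f) (hS.submatrix hf), ← hmap,
    Measure.map_map (by fun_prop) (by fun_prop), Measure.map_map (by fun_prop) (by fun_prop)]
  rfl

theorem memLp_two_eval_mvGaussian (m : ι → ℝ) {S : Matrix ι ι ℝ} (hS : S.PosDef) (i : ι) :
    MemLp (fun x => x i) 2 (mvGaussian m S) :=
  have := isGaussian_mvGaussian m hS
  IsGaussian.memLp_dual (mvGaussian m S) (.proj (R := ℝ) (φ := fun _ => ℝ) i) 2 (by simp)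

theorem integral_eval_mvGaussian (m : ι → ℝ) {S : Matrix ι ι ℝ} (hS : S.PosDef) (i : ι) :
    ∫ x, x i ∂mvGaussian m S = m i := by
  have hi : Measurable fun x : ι → ℝ => x i := measurable_pi_apply i
  rw [mvGaussian_eq_map_multivariateGaussian m hS,
    integral_map (by fun_prop) hi.aestronglyMeasurable]
  exact ((EuclideanSpace.proj i : EuclideanSpace ℝ ι →L[ℝ] ℝ).integral_comp_id_comm
    IsGaussian.integrable_id).trans (by simp)

theorem covariance_eval_mvGaussian (m : ι → ℝ) {S : Matrix ι ι ℝ} (hS : S.PosDef) (i j : ι) :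
    cov[fun x => x i, fun x => x j; mvGaussian m S] = S i j := by
  rw [mvGaussian_eq_map_multivariateGaussian m hS,
    covariance_map_fun (measurable_pi_apply i).aestronglyMeasurable
      (measurable_pi_apply j).aestronglyMeasurable (by fun_prop)]
  exact covariance_eval_multivariateGaussian hS.posSemidef i j

end Gaussian

section QuadraticForm

variable {ι Ω : Type*} [Fintype ι] [MeasurableSpace Ω] {P : Measure Ω} {X : Ω → ι → ℝ}

theorem dotProduct_mulVec_eq_sum (A : Matrix ι ι ℝ) (x : ι → ℝ) :
    x ⬝ᵥ (A *ᵥ x) = ∑ i, ∑ j, A i j * (x i * x j) := by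
  simp only [dotProduct, mulVec, Finset.mul_sum]
  exact Finset.sum_congr rfl fun i _ => Finset.sum_congr rfl fun j _ => by ring

theorem integrable_dotProduct_mulVec (hX : ∀ i, MemLp (fun ω => X ω i) 2 P) (A : Matrix ι ι ℝ) :
    Integrable (fun ω => X ω ⬝ᵥ (A *ᵥ X ω)) P := by
  simp only [dotProduct_mulVec_eq_sum]
  exact integrable_finsetSum _ fun i _ => integrable_finsetSum _ fun j _ =>
    ((hX i).integrable_mul (hX j)).const_mul (A i j)

theorem integral_dotProduct_mulVec [IsProbabilityMeasure P]
    (hX : ∀ i, MemLp (fun ω => X ω i) 2 P) (A : Matrix ι ι ℝ) :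
    ∫ ω, X ω ⬝ᵥ (A *ᵥ X ω) ∂P =
      (A * of fun i j => cov[fun ω => X ω i, fun ω => X ω j; P]).trace +
        (fun i => ∫ ω, X ω i ∂P) ⬝ᵥ (A *ᵥ fun i => ∫ ω, X ω i ∂P) := by
  have hXX (i j : ι) : Integrable (fun ω => A i j * (X ω i * X ω j)) P :=
    ((hX i).integrable_mul (hX j)).const_mul (A i j)
  have hmoment (i j : ι) : ∫ ω, X ω i * X ω j ∂P =
      cov[fun ω => X ω j, fun ω => X ω i; P] + (∫ ω, X ω i ∂P) * ∫ ω, X ω j ∂P := by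
    rw [covariance_comm, covariance_eq_sub (hX i) (hX j), sub_add_cancel]
    rfl
  simp only [dotProduct_mulVec_eq_sum]
  rw [integral_finsetSum _ fun i _ => integrable_finsetSum _ fun j _ => hXX i j]
  simp only [integral_finsetSum _ fun j _ => hXX _ j, integral_const_mul, hmoment, trace, diag,
    mul_apply, of_apply, mul_add, Finset.sum_add_distrib]

end QuadraticForm

section GaussianDivergence

variable {ι κ : Type*} [Fintype ι] [DecidableEq ι] [Fintype κ] [DecidableEq κ]

theorem memLp_two_eval_sub_mvGaussian (m a : ι → ℝ) {S : Matrix ι ι ℝ} (hS : S.PosDef) (i : ι) :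
    MemLp (fun x => (x - a) i) 2 (mvGaussian m S) :=
  have := isGaussian_mvGaussian m hS
  (memLp_two_eval_mvGaussian m hS i).sub (memLp_const (a i))

theorem integral_sub_dotProduct_mulVec_mvGaussian (m a : ι → ℝ) {S : Matrix ι ι ℝ}
    (hS : S.PosDef) (A : Matrix ι ι ℝ) :
    ∫ x, (x - a) ⬝ᵥ (A *ᵥ (x - a)) ∂mvGaussian m S =
      (A * S).trace + (m - a) ⬝ᵥ (A *ᵥ (m - a)) := by
  have := isGaussian_mvGaussian m hS
  have hint (i : ι) : Integrable (fun x => x i) (mvGaussian m S) :=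
    (memLp_two_eval_mvGaussian m hS i).integrable one_le_two
  have hmean : (fun i => ∫ x, (x - a) i ∂mvGaussian m S) = m - a := by
    ext i
    simp only [Pi.sub_apply]
    rw [integral_sub (hint i) (integrable_const _), integral_eval_mvGaussian m hS, integral_const,
      probReal_univ, one_smul]
  have hcov : (of fun i j => cov[fun x => (x - a) i, fun x => (x - a) j; mvGaussian m S]) = S := by
    ext i j
    simp only [of_apply, Pi.sub_apply]
    rw [covariance_sub_const_left (hint i), covariance_sub_const_right (hint j),
      covariance_eval_mvGaussian m hS]
  rw [integral_dotProduct_mulVec (memLp_two_eval_sub_mvGaussian m a hS), hmean, hcov]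

theorem log_mvGaussianPDFReal_div (m m' : ι → ℝ) {S T : Matrix ι ι ℝ} (hS : 0 < S.det)
    (hT : 0 < T.det) (x : ι → ℝ) :
    Real.log (mvGaussianPDFReal m S x / mvGaussianPDFReal m' T x) =
      1 / 2 * (Real.log (T.det / S.det) +
        ((x - m') ⬝ᵥ (T⁻¹ *ᵥ (x - m')) - (x - m) ⬝ᵥ (S⁻¹ *ᵥ (x - m)))) := by
  rw [Real.log_div (mvGaussianPDFReal_pos m hS x).ne' (mvGaussianPDFReal_pos m' hT x).ne',
    log_mvGaussianPDFReal m hS, log_mvGaussianPDFReal m' hT, Real.log_div hT.ne' hS.ne']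
  ring

theorem klDiv_mvGaussian (m m' : ι → ℝ) {S T : Matrix ι ι ℝ} (hS : S.PosDef) (hT : 0 < T.det) :
    klDiv (mvGaussian m S) (mvGaussian m' T) =
      ((1 / 2 * (Real.log (T.det / S.det) + (T⁻¹ * S).trace - Fintype.card ι +
        (m - m') ⬝ᵥ (T⁻¹ *ᵥ (m - m'))) : ℝ) : EReal) := by
  have := isGaussian_mvGaussian m hS
  have hquad (a : ι → ℝ) (A : Matrix ι ι ℝ) :
      Integrable (fun x => (x - a) ⬝ᵥ (A *ᵥ (x - a))) (mvGaussian m S) :=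
    integrable_dotProduct_mulVec (memLp_two_eval_sub_mvGaussian m a hS) A
  have hsub : Integrable
      (fun x => (x - m') ⬝ᵥ (T⁻¹ *ᵥ (x - m')) - (x - m) ⬝ᵥ (S⁻¹ *ᵥ (x - m))) (mvGaussian m S) :=
    (hquad m' T⁻¹).sub (hquad m S⁻¹)
  have hint : Integrable (fun x => Real.log (mvGaussianPDFReal m S x / mvGaussianPDFReal m' T x))
      (mvGaussian m S) := by
    simp only [log_mvGaussianPDFReal_div m m' hS.det_pos hT]
    exact ((integrable_const _).add hsub).const_mul _
  have hinv : S⁻¹ * S = 1 := nonsing_inv_mul S hS.det_pos.ne'.isUnit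
  calc klDiv (mvGaussian m S) (mvGaussian m' T)
    _ = ((∫ x, Real.log (mvGaussianPDFReal m S x / mvGaussianPDFReal m' T x) ∂mvGaussian m S : ℝ) :
        EReal) :=
      klDiv_withDensity_ofReal volume (measurable_mvGaussianPDFReal m S)
        (measurable_mvGaussianPDFReal m' T) (fun x => (mvGaussianPDFReal_pos m hS.det_pos x).le)
        (mvGaussianPDFReal_pos m' hT) hint
    _ = _ := by
      simp only [log_mvGaussianPDFReal_div m m' hS.det_pos hT]
      rw [integral_const_mul, integral_add (integrable_const _) hsub,
        integral_sub (hquad m' T⁻¹) (hquad m S⁻¹), integral_const, probReal_univ, one_smul,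
        integral_sub_dotProduct_mulVec_mvGaussian m m' hS,
        integral_sub_dotProduct_mulVec_mvGaussian m m hS, hinv, trace_one, sub_self,
        zero_dotProduct, add_zero]
      congr 2
      ring

end GaussianDivergence

section BlockDiagonal

variable {ι κ : Type*} [Fintype ι] [DecidableEq ι] [Fintype κ] [DecidableEq κ]

theorem inv_fromBlocks_zero_zero {S₁ : Matrix ι ι ℝ} {S₂ : Matrix κ κ ℝ} (h₁ : S₁.det ≠ 0)
    (h₂ : S₂.det ≠ 0) : (fromBlocks S₁ 0 0 S₂)⁻¹ = fromBlocks S₁⁻¹ 0 0 S₂⁻¹ := by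
  rw [inv_fromBlocks_zero₂₁_of_isUnit_iff]
  · simp
  · simp only [isUnit_iff_isUnit_det, h₁.isUnit, h₂.isUnit]

theorem mvGaussianPDFReal_fromBlocks (m₁ : ι → ℝ) (m₂ : κ → ℝ) {S₁ : Matrix ι ι ℝ}
    {S₂ : Matrix κ κ ℝ} (h₁ : 0 < S₁.det) (h₂ : 0 < S₂.det) (x : ι ⊕ κ → ℝ) :
    mvGaussianPDFReal (Sum.elim m₁ m₂) (fromBlocks S₁ 0 0 S₂) x =
      mvGaussianPDFReal m₁ S₁ (x ∘ Sum.inl) * mvGaussianPDFReal m₂ S₂ (x ∘ Sum.inr) := by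
  have hdet : (fromBlocks S₁ 0 0 S₂).det = S₁.det * S₂.det := det_fromBlocks_zero₂₁ ..
  have hquad : (x - Sum.elim m₁ m₂) ⬝ᵥ ((fromBlocks S₁ 0 0 S₂)⁻¹ *ᵥ (x - Sum.elim m₁ m₂)) =
      (x ∘ Sum.inl - m₁) ⬝ᵥ (S₁⁻¹ *ᵥ (x ∘ Sum.inl - m₁)) +
        (x ∘ Sum.inr - m₂) ⬝ᵥ (S₂⁻¹ *ᵥ (x ∘ Sum.inr - m₂)) := by
    have hx : x - Sum.elim m₁ m₂ = Sum.elim (x ∘ Sum.inl - m₁) (x ∘ Sum.inr - m₂) := by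
      ext (i | j) <;> rfl
    rw [inv_fromBlocks_zero_zero h₁.ne' h₂.ne', hx, fromBlocks_mulVec, sumElim_dotProduct_sumElim]
    simp
  have hprod : 0 < (fromBlocks S₁ 0 0 S₂).det := hdet ▸ mul_pos h₁ h₂
  refine Real.log_injOn_pos (mvGaussianPDFReal_pos _ hprod x)
    (mul_pos (mvGaussianPDFReal_pos _ h₁ _) (mvGaussianPDFReal_pos _ h₂ _)) ?_
  rw [Real.log_mul (mvGaussianPDFReal_pos _ h₁ _).ne' (mvGaussianPDFReal_pos _ h₂ _).ne',
    log_mvGaussianPDFReal _ hprod, log_mvGaussianPDFReal _ h₁, log_mvGaussianPDFReal _ h₂, hquad,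
    hdet, Real.log_mul h₁.ne' h₂.ne', Fintype.card_sum]
  push_cast
  ring

theorem prod_mvGaussian (m₁ : ι → ℝ) (m₂ : κ → ℝ) {S₁ : Matrix ι ι ℝ} {S₂ : Matrix κ κ ℝ}
    (h₁ : 0 < S₁.det) (h₂ : 0 < S₂.det) :
    (mvGaussian m₁ S₁).prod (mvGaussian m₂ S₂) =
      (mvGaussian (Sum.elim m₁ m₂) (fromBlocks S₁ 0 0 S₂)).map
        (MeasurableEquiv.sumPiEquivProdPi fun _ => ℝ) := by
  set e := MeasurableEquiv.sumPiEquivProdPi fun _ : ι ⊕ κ => ℝ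
  have hp₁ := (measurable_mvGaussianPDFReal m₁ S₁).ennreal_ofReal
  have hp₂ := (measurable_mvGaussianPDFReal m₂ S₂).ennreal_ofReal
  have hvol : volume.map e = (volume : Measure (ι → ℝ)).prod (volume : Measure (κ → ℝ)) :=
    (volume_measurePreserving_sumPiEquivProdPi fun _ : ι ⊕ κ => ℝ).map_eq
  have hpdf (x : ι ⊕ κ → ℝ) :
      ENNReal.ofReal (mvGaussianPDFReal (Sum.elim m₁ m₂) (fromBlocks S₁ 0 0 S₂) x) =
        ENNReal.ofReal (mvGaussianPDFReal m₁ S₁ (e x).1) *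
          ENNReal.ofReal (mvGaussianPDFReal m₂ S₂ (e x).2) := by
    rw [mvGaussianPDFReal_fromBlocks m₁ m₂ h₁ h₂,
      ENNReal.ofReal_mul (mvGaussianPDFReal_pos m₁ h₁ _).le]
    rfl
  simp only [mvGaussian_eq_withDensity, hpdf]
  rw [prod_withDensity hp₁ hp₂, ← hvol]
  exact (map_withDensity_comp volume e.measurable
    ((hp₁.comp measurable_fst).mul (hp₂.comp measurable_snd))).symm

theorem trace_inv_fromBlocks_mul {S : Matrix (ι ⊕ κ) (ι ⊕ κ) ℝ} (h₁ : S.toBlocks₁₁.det ≠ 0)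
    (h₂ : S.toBlocks₂₂.det ≠ 0) :
    ((fromBlocks S.toBlocks₁₁ 0 0 S.toBlocks₂₂)⁻¹ * S).trace = Fintype.card (ι ⊕ κ) := by
  conv_lhs => rw [inv_fromBlocks_zero_zero h₁ h₂, ← fromBlocks_toBlocks S]
  simp [fromBlocks_multiply, trace, nonsing_inv_mul _ h₁.isUnit, nonsing_inv_mul _ h₂.isUnit]

end BlockDiagonal

theorem mutualInfo_gaussian_eq_half_log_det_general {ι κ : Type*} [Fintype ι] [DecidableEq ι]
    [Fintype κ] [DecidableEq κ] (m : ι ⊕ κ → ℝ) (S : Matrix (ι ⊕ κ) (ι ⊕ κ) ℝ) (hS : S.PosDef) :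
    mutualInfo ((mvGaussian m S).map (MeasurableEquiv.sumPiEquivProdPi fun _ => ℝ)) =
      ((1 / 2 * Real.log (S.toBlocks₁₁.det * S.toBlocks₂₂.det / S.det) : ℝ) : EReal) := by
  set e := MeasurableEquiv.sumPiEquivProdPi fun _ : ι ⊕ κ => ℝ
  set T := fromBlocks S.toBlocks₁₁ 0 0 S.toBlocks₂₂
  have h₁ : 0 < S.toBlocks₁₁.det := (hS.submatrix Sum.inl_injective).det_pos
  have h₂ : 0 < S.toBlocks₂₂.det := (hS.submatrix Sum.inr_injective).det_pos
  have hT : T.det = S.toBlocks₁₁.det * S.toBlocks₂₂.det := det_fromBlocks_zero₂₁ ..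
  have hTpos : 0 < T.det := hT ▸ mul_pos h₁ h₂
  have hfst : ((mvGaussian m S).map e).map Prod.fst = mvGaussian (m ∘ Sum.inl) S.toBlocks₁₁ := by
    rw [Measure.map_map measurable_fst e.measurable]
    exact map_comp_mvGaussian m hS Sum.inl_injective
  have hsnd : ((mvGaussian m S).map e).map Prod.snd = mvGaussian (m ∘ Sum.inr) S.toBlocks₂₂ := by
    rw [Measure.map_map measurable_snd e.measurable]
    exact map_comp_mvGaussian m hS Sum.inr_injective
  rw [mutualInfo, hfst, hsnd, prod_mvGaussian _ _ h₁ h₂, Sum.elim_comp_inl_inr,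
    klDiv_map_measurableEquiv, klDiv_mvGaussian m m hS hTpos,
    trace_inv_fromBlocks_mul h₁.ne' h₂.ne', hT, sub_self, zero_dotProduct, add_zero,
    add_sub_cancel_right]

/-- **Determinant formula for the mutual information of a jointly Gaussian vector**:
if `P = N(0, Σ)` is the centered Gaussian on `ℝ^{d_X} × ℝ^{d_Y}` with positive definite
covariance `Σ`, whose diagonal blocks are `Σ_X` and `Σ_Y`, then
`I(P) = (1/2) · log(det Σ_X · det Σ_Y / det Σ)`. -/
theorem mutualInfo_gaussian_eq_half_log_det
    {dX dY : ℕ} (S : Matrix (Fin dX ⊕ Fin dY) (Fin dX ⊕ Fin dY) ℝ) (hS : S.PosDef) :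
    mutualInfo ((mvGaussian 0 S).map (MeasurableEquiv.sumPiEquivProdPi fun _ => ℝ))
      = ((1/2 * Real.log (S.toBlocks₁₁.det * S.toBlocks₂₂.det / S.det) : ℝ) : EReal) := by
  exact mutualInfo_gaussian_eq_half_log_det_general 0 S hS
end

section
/- Singular-value clipping is the Frobenius projection onto the spectral-norm unit ball (projection operator in Proposition 3.4): let A be a real m × n matrix with singular value decomposition A = U diag(σ₁, …, σ_r) Vᵀ, where U and V have orthonormal columns and σ_i ≥ 0. Let Ā := U diag(min(σ₁, 1), …, min(σ_r, 1)) Vᵀ. Then ‖Ā‖₂ ≤ 1, and for every real m × n matrix B with ‖B‖₂ ≤ 1 one has ‖Ā − A‖_F ≤ ‖B − A‖_F. -/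
/-!
Multiplying a matrix on either side by a contraction does not increase its Frobenius norm, and
`U`, `V` and their adjoints are contractions. With `a = σ` and `b = min σ 1`, for every `B` in the
spectral unit ball this gives
`‖U diag(b) Vᴴ - U diag(a) Vᴴ‖_F ≤ ‖diag(b - a)‖_F ≤ ‖Uᴴ B V - diag(a)‖_F ≤ ‖B - U diag(a) Vᴴ‖_F`.
The middle inequality discards the off-diagonal entries and compares the diagonal ones: those of
`Uᴴ B V` have modulus at most `1`, and `b k` is the point of the unit ball nearest to `a k`.
-/

open Matrix

/-- The spectral norm of a real rectangular matrix: the `ℓ² → ℓ²` operator norm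
of the associated linear map between Euclidean spaces. -/
noncomputable def specNorm {m n : ℕ} (M : Matrix (Fin m) (Fin n) ℝ) : ℝ :=
  ‖LinearMap.toContinuousLinearMap (Matrix.toEuclideanLin M)‖

/-- The Frobenius norm of a real matrix: the square root of the sum of squared entries. -/
noncomputable def frobNorm {m n : ℕ} (M : Matrix (Fin m) (Fin n) ℝ) : ℝ :=
  Real.sqrt (∑ i, ∑ j, (M i j) ^ 2)

open scoped Matrix.Norms.L2Operator

theorem abs_min_sub_le_abs_sub {α : Type*} [AddCommGroup α] [LinearOrder α] [IsOrderedAddMonoid α]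
    {s c z : α} (hz : z ≤ c) : |min s c - s| ≤ |z - s| := by
  rcases le_total s c with hs | hs
  · simp only [min_eq_left hs, sub_self, abs_zero, abs_nonneg]
  · rw [min_eq_right hs, abs_sub_comm c, abs_sub_comm z, abs_of_nonneg (sub_nonneg.2 hs),
      abs_of_nonneg (sub_nonneg.2 (hz.trans hs))]
    exact sub_le_sub_left hz s

theorem mul_sub_mul_eq_of_mul_eq_one {R m n r s : Type*} [Ring R] [Fintype m] [Fintype n]
    [Fintype r] [Fintype s] [DecidableEq r] [DecidableEq s] {U : Matrix m r R} {U' : Matrix r m R}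
    {V : Matrix n s R} {V' : Matrix s n R} (hU : U' * U = 1) (hV : V' * V = 1) (B : Matrix m n R)
    (D : Matrix r s R) : U' * (B - U * D * V') * V = U' * B * V - D :=
  calc U' * (B - U * D * V') * V = U' * B * V - (U' * U) * D * (V' * V) := by
        simp only [Matrix.mul_sub, Matrix.sub_mul, Matrix.mul_assoc]
    _ = U' * B * V - D := by rw [hU, hV, Matrix.one_mul, Matrix.mul_one]

section L2OpNorm

variable {𝕜 k l m n : Type*} [RCLike 𝕜] [Fintype k] [Fintype l] [Fintype m] [Fintype n]
  [DecidableEq n]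

theorem norm_entry_le_l2_opNorm (M : Matrix m n 𝕜) (i : m) (j : n) : ‖M i j‖ ≤ ‖M‖ :=
  calc ‖M i j‖ = ‖WithLp.toLp 2 (M *ᵥ Pi.single j 1) i‖ := by
        simp only [mulVec_single_one, col_apply]
    _ ≤ ‖WithLp.toLp 2 (M *ᵥ Pi.single j 1)‖ := PiLp.norm_apply_le _ i
    _ ≤ ‖M‖ * ‖EuclideanSpace.single j (1 : 𝕜)‖ := l2_opNorm_mulVec M (EuclideanSpace.single j 1)
    _ = ‖M‖ := by rw [PiLp.norm_single, norm_one, mul_one]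

theorem l2_opNorm_mul_mul_le_of_contractions [DecidableEq l] [DecidableEq m] {P : Matrix k l 𝕜}
    {Q : Matrix m n 𝕜} (hP : ‖P‖ ≤ 1) (hQ : ‖Q‖ ≤ 1) (X : Matrix l m 𝕜) : ‖P * X * Q‖ ≤ ‖X‖ :=
  calc ‖P * X * Q‖ ≤ ‖P‖ * ‖X‖ * ‖Q‖ := by grw [l2_opNorm_mul, l2_opNorm_mul]
    _ ≤ 1 * ‖X‖ * 1 := by gcongr
    _ = ‖X‖ := by rw [one_mul, mul_one]

theorem l2_opNorm_le_one_of_conjTranspose_mul_self_eq_one {U : Matrix m n 𝕜} (hU : Uᴴ * U = 1) :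
    ‖U‖ ≤ 1 := by
  have norm_sq_le : ‖U‖ * ‖U‖ ≤ 1 := by
    rw [← l2_opNorm_conjTranspose_mul_self, hU, ← diagonal_one, l2_opNorm_diagonal]
    exact (pi_norm_const_le 1).trans_eq norm_one
  exact (le_abs_self _).trans (abs_le_one_iff_mul_self_le_one.2 norm_sq_le)

end L2OpNorm

section FrobeniusNorm

variable {α 𝕜 k l m n : Type*} [RCLike 𝕜] [Fintype k] [Fintype l] [Fintype m] [Fintype n]

/-- The Frobenius norm, that of `Matrix.frobeniusSeminormedAddCommGroup`. It is a function rather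
than an instance so that it can be compared with the `ℓ²` operator norm `‖·‖`. -/
noncomputable def frobeniusNorm [SeminormedAddCommGroup α] (M : Matrix m n α) : ℝ :=
  letI := frobeniusSeminormedAddCommGroup (m := m) (n := n) (α := α)
  ‖M‖

theorem frobeniusNorm_eq_sqrt [SeminormedAddCommGroup α] (M : Matrix m n α) :
    frobeniusNorm M = √(∑ i, ∑ j, ‖M i j‖ ^ 2) := by
  rw [frobeniusNorm, frobenius_norm_def, Real.sqrt_eq_rpow]
  simp only [Real.rpow_two]

theorem frobeniusNorm_conjTranspose [SeminormedAddCommGroup α] [StarAddMonoid α]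
    [NormedStarGroup α] (M : Matrix m n α) : frobeniusNorm Mᴴ = frobeniusNorm M :=
  frobenius_norm_conjTranspose M

theorem frobeniusNorm_eq_sqrt_sum_col [SeminormedAddCommGroup α] (M : Matrix m n α) :
    frobeniusNorm M = √(∑ j, ‖WithLp.toLp 2 (M.col j)‖ ^ 2) := by
  rw [frobeniusNorm_eq_sqrt, Finset.sum_comm]
  simp only [PiLp.norm_sq_eq_of_L2, col_apply]

theorem frobeniusNorm_mul_le_l2_opNorm_mul [DecidableEq m] (P : Matrix l m 𝕜) (X : Matrix m n 𝕜) :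
    frobeniusNorm (P * X) ≤ ‖P‖ * frobeniusNorm X := by
  have norm_col_le (j : n) :
      ‖WithLp.toLp 2 ((P * X).col j)‖ ≤ ‖P‖ * ‖WithLp.toLp 2 (X.col j)‖ :=
    l2_opNorm_mulVec P (WithLp.toLp 2 (X.col j))
  calc frobeniusNorm (P * X) = √(∑ j, ‖WithLp.toLp 2 ((P * X).col j)‖ ^ 2) :=
        frobeniusNorm_eq_sqrt_sum_col _
    _ ≤ √(∑ j, (‖P‖ * ‖WithLp.toLp 2 (X.col j)‖) ^ 2) := by gcongr with j; exact norm_col_le j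
    _ = ‖P‖ * frobeniusNorm X := by
        simp only [mul_pow, ← Finset.mul_sum]
        rw [Real.sqrt_mul (sq_nonneg _), Real.sqrt_sq (norm_nonneg _),
          ← frobeniusNorm_eq_sqrt_sum_col]

theorem frobeniusNorm_mul_le_mul_l2_opNorm [DecidableEq n] (X : Matrix l m 𝕜) (Q : Matrix m n 𝕜) :
    frobeniusNorm (X * Q) ≤ frobeniusNorm X * ‖Q‖ := by
  classical
  calc frobeniusNorm (X * Q) = frobeniusNorm (Qᴴ * Xᴴ) := by
        rw [← conjTranspose_mul, frobeniusNorm_conjTranspose]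
    _ ≤ ‖Qᴴ‖ * frobeniusNorm Xᴴ := frobeniusNorm_mul_le_l2_opNorm_mul _ _
    _ = frobeniusNorm X * ‖Q‖ := by
        rw [l2_opNorm_conjTranspose, frobeniusNorm_conjTranspose, mul_comm]

theorem frobeniusNorm_mul_mul_le_of_contractions [DecidableEq l] [DecidableEq n]
    {P : Matrix k l 𝕜} {Q : Matrix m n 𝕜} (hP : ‖P‖ ≤ 1) (hQ : ‖Q‖ ≤ 1) (X : Matrix l m 𝕜) :
    frobeniusNorm (P * X * Q) ≤ frobeniusNorm X := by
  have frobeniusNorm_nonneg : 0 ≤ frobeniusNorm X := by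
    rw [frobeniusNorm_eq_sqrt]
    exact Real.sqrt_nonneg _
  calc frobeniusNorm (P * X * Q) ≤ frobeniusNorm (P * X) * ‖Q‖ :=
        frobeniusNorm_mul_le_mul_l2_opNorm _ _
    _ ≤ ‖P‖ * frobeniusNorm X * ‖Q‖ := by grw [frobeniusNorm_mul_le_l2_opNorm_mul]
    _ ≤ 1 * frobeniusNorm X * 1 := by gcongr
    _ = frobeniusNorm X := by rw [one_mul, mul_one]

theorem frobeniusNorm_diagonal_le [SeminormedAddCommGroup α] [DecidableEq n] {d : n → α}
    {M : Matrix n n α} (hd : ∀ i, ‖d i‖ ≤ ‖M i i‖) :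
    frobeniusNorm (diagonal d) ≤ frobeniusNorm M := by
  simp only [frobeniusNorm_eq_sqrt]
  gcongr with i _ j _
  rcases eq_or_ne i j with rfl | hij
  · rw [diagonal_apply_eq]
    exact hd i
  · rw [diagonal_apply_ne _ hij, norm_zero]
    exact norm_nonneg _

end FrobeniusNorm

theorem svd_clipping_is_frobenius_projection_general {𝕜 m n r : Type*} [RCLike 𝕜] [Fintype m]
    [Fintype n] [Fintype r] [DecidableEq n] [DecidableEq r] {U : Matrix m r 𝕜} {V : Matrix n r 𝕜}
    (hU : Uᴴ * U = 1) (hV : Vᴴ * V = 1) {a b : r → 𝕜} {c : ℝ} (hc : 0 ≤ c) (hb : ∀ k, ‖b k‖ ≤ c)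
    (hab : ∀ k z, ‖z‖ ≤ c → ‖b k - a k‖ ≤ ‖z - a k‖) :
    ‖U * diagonal b * Vᴴ‖ ≤ c ∧
      ∀ B : Matrix m n 𝕜, ‖B‖ ≤ c →
        frobeniusNorm (U * diagonal b * Vᴴ - U * diagonal a * Vᴴ) ≤
          frobeniusNorm (B - U * diagonal a * Vᴴ) := by
  classical
  have norm_U_le : ‖U‖ ≤ 1 := l2_opNorm_le_one_of_conjTranspose_mul_self_eq_one hU
  have norm_V_le : ‖V‖ ≤ 1 := l2_opNorm_le_one_of_conjTranspose_mul_self_eq_one hV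
  have norm_adjU_le : ‖Uᴴ‖ ≤ 1 := (l2_opNorm_conjTranspose U).trans_le norm_U_le
  have norm_adjV_le : ‖Vᴴ‖ ≤ 1 := (l2_opNorm_conjTranspose V).trans_le norm_V_le
  refine ⟨?_, fun B hB => ?_⟩
  · calc ‖U * diagonal b * Vᴴ‖ ≤ ‖diagonal b‖ :=
          l2_opNorm_mul_mul_le_of_contractions norm_U_le norm_adjV_le _
      _ = ‖b‖ := l2_opNorm_diagonal b
      _ ≤ c := (pi_norm_le_iff_of_nonneg hc).2 hb
  have diag_le (k : r) : ‖b k - a k‖ ≤ ‖(Uᴴ * B * V - diagonal a) k k‖ := by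
    rw [Matrix.sub_apply, diagonal_apply_eq]
    refine hab k _ ((norm_entry_le_l2_opNorm _ k k).trans ?_)
    exact (l2_opNorm_mul_mul_le_of_contractions norm_adjU_le norm_V_le B).trans hB
  calc frobeniusNorm (U * diagonal b * Vᴴ - U * diagonal a * Vᴴ)
      = frobeniusNorm (U * diagonal (fun k => b k - a k) * Vᴴ) := by
        rw [← Matrix.sub_mul, ← Matrix.mul_sub, diagonal_sub]
    _ ≤ frobeniusNorm (diagonal fun k => b k - a k) :=
        frobeniusNorm_mul_mul_le_of_contractions norm_U_le norm_adjV_le _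
    _ ≤ frobeniusNorm (Uᴴ * B * V - diagonal a) := frobeniusNorm_diagonal_le diag_le
    _ = frobeniusNorm (Uᴴ * (B - U * diagonal a * Vᴴ) * V) := by
        rw [mul_sub_mul_eq_of_mul_eq_one hU hV]
    _ ≤ frobeniusNorm (B - U * diagonal a * Vᴴ) :=
        frobeniusNorm_mul_mul_le_of_contractions norm_adjU_le norm_V_le _

theorem specNorm_eq_l2_opNorm {m n : ℕ} (M : Matrix (Fin m) (Fin n) ℝ) : specNorm M = ‖M‖ := rfl

theorem frobNorm_eq_frobeniusNorm {m n : ℕ} (M : Matrix (Fin m) (Fin n) ℝ) :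
    frobNorm M = frobeniusNorm M := by
  simp only [frobNorm, frobeniusNorm_eq_sqrt, Real.norm_eq_abs, sq_abs]

/-- **Singular-value clipping is the Frobenius projection onto the spectral-norm unit
ball** (projection operator in Proposition 3.4): if `A = U diag(σ) Vᵀ` with `U, V` having
orthonormal columns and `σ ≥ 0`, then `Ā = U diag(min σ 1) Vᵀ` satisfies `‖Ā‖₂ ≤ 1` and
`‖Ā − A‖_F ≤ ‖B − A‖_F` for every `B` with `‖B‖₂ ≤ 1`. -/
theorem svd_clipping_is_frobenius_projection {m n r : ℕ}
    (U : Matrix (Fin m) (Fin r) ℝ) (V : Matrix (Fin n) (Fin r) ℝ)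
    (hU : Uᵀ * U = 1) (hV : Vᵀ * V = 1)
    (σ : Fin r → ℝ) (hσ : ∀ i, 0 ≤ σ i)
    (A : Matrix (Fin m) (Fin n) ℝ) (hA : A = U * Matrix.diagonal σ * Vᵀ)
    (Abar : Matrix (Fin m) (Fin n) ℝ)
    (hAbar : Abar = U * Matrix.diagonal (fun i => min (σ i) 1) * Vᵀ) :
    specNorm Abar ≤ 1 ∧
      ∀ B : Matrix (Fin m) (Fin n) ℝ, specNorm B ≤ 1 →
        frobNorm (Abar - A) ≤ frobNorm (B - A) := by
  subst hA hAbar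
  simp only [specNorm_eq_l2_opNorm, frobNorm_eq_frobeniusNorm,
    ← conjTranspose_eq_transpose_of_trivial] at hU hV ⊢
  refine svd_clipping_is_frobenius_projection_general hU hV zero_le_one (fun i => ?_)
    fun i z hz => abs_min_sub_le_abs_sub (le_of_abs_le hz)
  exact (Real.norm_of_nonneg (le_min (hσ i) zero_le_one)).trans_le (min_le_right _ _)
end

section
/- Gradient of the Thin-PID objective (Proposition 3.4): let C be a positive semidefinite real (d₁ + d₂) × (d₁ + d₂) matrix (C = H Σ_Y Hᵀ in the Thin-PID setting), and for a real d₁ × d₂ matrix M with ‖M‖₂ < 1 let Σ(M) := fromBlocks I_{d₁} M Mᵀ I_{d₂} and L(M) := log det(C + Σ(M)) − log det Σ(M). Write G := C + Σ(M) in block form with blocks G₁₁ (d₁ × d₁), G₁₂ (d₁ × d₂), G₂₂ (d₂ × d₂), and let B := G₂₂ − G₁₂ᵀ G₁₁⁻¹ G₁₂. Then L is differentiable at M and, for every direction E ∈ ℝ^{d₁ × d₂}, the directional derivative of L at M along E equals 2 · trace( Eᵀ ( −G₁₁⁻¹ G₁₂ B⁻¹ + M (I_{d₂} − Mᵀ M)⁻¹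 ) ); that is, up to the factor 2 from symmetry, the gradient of L with respect to M is ∇L(M) = −G₁₁⁻¹ G₁₂ B⁻¹ + M (I_{d₂} − Mᵀ M)⁻¹. -/
/-!
By Jacobi's formula the gradient of `log det` at an invertible matrix `G` is `(G⁻¹)ᵀ`, for the
pairing `⟪X, E⟫ = trace (Eᵀ X)`. An off-diagonal block `B` of a symmetric block matrix `G` occurs
twice, as `B` and as `Bᵀ`, so the gradient with respect to `B` is twice the upper right block of
`G⁻¹`, which the Schur complement formula computes. Both terms of the objective are of this form:
for `Σ(M)` the blocks are `A = D = 1` and `B = M`, with Schur complement `1 - Mᵀ M`.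

If `‖M‖₂ < 1`, this Schur complement is positive definite, hence so is `Σ(M)`, and `G = C + Σ(M)`
with it.
-/

open Matrix

attribute [local instance] Matrix.normedAddCommGroup Matrix.normedSpace

/-- The whitened joint noise covariance `Σ(M) = fromBlocks I M Mᵀ I`. -/
noncomputable def SigmaM {d₁ d₂ : ℕ} (M : Matrix (Fin d₁) (Fin d₂) ℝ) :
    Matrix (Fin d₁ ⊕ Fin d₂) (Fin d₁ ⊕ Fin d₂) ℝ :=
  fromBlocks 1 M Mᵀ 1

/-- The Thin-PID objective `L(M) = log det (C + Σ(M)) − log det Σ(M)`. -/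
noncomputable def thinPIDObjective {d₁ d₂ : ℕ}
    (C : Matrix (Fin d₁ ⊕ Fin d₂) (Fin d₁ ⊕ Fin d₂) ℝ)
    (M : Matrix (Fin d₁) (Fin d₂) ℝ) : ℝ :=
  Real.log (C + SigmaM M).det - Real.log (SigmaM M).det

/-- The matrix `G = C + Σ(M)`. -/
noncomputable def Gmat {d₁ d₂ : ℕ}
    (C : Matrix (Fin d₁ ⊕ Fin d₂) (Fin d₁ ⊕ Fin d₂) ℝ)
    (M : Matrix (Fin d₁) (Fin d₂) ℝ) :
    Matrix (Fin d₁ ⊕ Fin d₂) (Fin d₁ ⊕ Fin d₂) ℝ :=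
  C + SigmaM M

/-- The Schur complement `B = G₂₂ − G₁₂ᵀ G₁₁⁻¹ G₁₂` of the block `G₁₁` of `G = C + Σ(M)`. -/
noncomputable def schurB {d₁ d₂ : ℕ}
    (C : Matrix (Fin d₁ ⊕ Fin d₂) (Fin d₁ ⊕ Fin d₂) ℝ)
    (M : Matrix (Fin d₁) (Fin d₂) ℝ) : Matrix (Fin d₂) (Fin d₂) ℝ :=
  (Gmat C M).toBlocks₂₂
    - (Gmat C M).toBlocks₁₂ᵀ * (Gmat C M).toBlocks₁₁⁻¹ * (Gmat C M).toBlocks₁₂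

lemma trace_fromBlocks {R m n : Type*} [AddCommMonoid R] [Fintype m] [Fintype n]
    (A : Matrix m m R) (B : Matrix m n R) (C : Matrix n m R) (D : Matrix n n R) :
    (fromBlocks A B C D).trace = A.trace + D.trace := by
  simp [trace]

section TracePairing

variable {𝕜 m n : Type*} [NontriviallyNormedField 𝕜]

/-- The trace pairing `E ↦ trace (Eᵀ X)`, linear in `X`. A function whose Fréchet derivative is
`tracePairing X` has gradient `X` with respect to the entries of its matrix argument. -/
def tracePairing [Fintype m] [Fintype n] : Matrix m n 𝕜 →ₗ[𝕜] Matrix m n 𝕜 →L[𝕜] 𝕜 where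
  toFun X :=
    { toFun := fun E => (Eᵀ * X).trace
      map_add' := fun E F => by rw [transpose_add, Matrix.add_mul, trace_add]
      map_smul' := fun c E => by rw [transpose_smul, Matrix.smul_mul, trace_smul]; rfl
      cont := by fun_prop }
  map_add' X Y := by ext E; simp [Matrix.mul_add]
  map_smul' c X := by ext E; simp

lemma tracePairing_apply [Fintype m] [Fintype n] (X E : Matrix m n 𝕜) :
    tracePairing X E = (Eᵀ * X).trace := rfl

/-- The embedding `E ↦ fromBlocks 0 E Eᵀ 0` of rectangular matrices as the off-diagonal part of
symmetric block matrices: the derivative of `B ↦ fromBlocks A B Bᵀ D`. -/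
def symmOffDiag : Matrix m n 𝕜 →L[𝕜] Matrix (m ⊕ n) (m ⊕ n) 𝕜 where
  toFun E := fromBlocks 0 E Eᵀ 0
  map_add' E F := by simp [fromBlocks_add]
  map_smul' c E := by simp [fromBlocks_smul]
  cont := by fun_prop

lemma symmOffDiag_apply (E : Matrix m n 𝕜) : symmOffDiag E = fromBlocks 0 E Eᵀ 0 := rfl

lemma hasFDerivAt_fromBlocks_transpose [Finite m] [Finite n] (A : Matrix m m 𝕜) (B : Matrix m n 𝕜)
    (D : Matrix n n 𝕜) :
    HasFDerivAt (fun N : Matrix m n 𝕜 => fromBlocks A N Nᵀ D) symmOffDiag B := by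
  cases nonempty_fintype m
  cases nonempty_fintype n
  have h : (fun N : Matrix m n 𝕜 => fromBlocks A N Nᵀ D) =
      fun N => fromBlocks A 0 0 D + symmOffDiag N := by
    funext N
    simp [symmOffDiag_apply, fromBlocks_add]
  rw [h]
  exact (symmOffDiag (𝕜 := 𝕜) (m := m) (n := n)).hasFDerivAt.const_add (fromBlocks A 0 0 D)

lemma tracePairing_comp_symmOffDiag [Fintype m] [Fintype n] (X : Matrix (m ⊕ n) (m ⊕ n) 𝕜) :
    (tracePairing X).comp symmOffDiag = tracePairing (X.toBlocks₁₂ + X.toBlocks₂₁ᵀ) := by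
  ext E
  have h₂₁ : (E * X.toBlocks₂₁).trace = (Eᵀ * X.toBlocks₂₁ᵀ).trace := by
    rw [← trace_transpose, transpose_mul, trace_mul_comm]
  rw [ContinuousLinearMap.comp_apply, symmOffDiag_apply, tracePairing_apply, tracePairing_apply,
    Matrix.mul_add, trace_add, ← h₂₁, add_comm]
  nth_rw 1 [← fromBlocks_toBlocks X]
  simp [fromBlocks_transpose, fromBlocks_multiply, trace_fromBlocks]

end TracePairing

section Jacobi

variable {n : Type*} [Fintype n] [DecidableEq n]

/-- Jacobi's formula. The derivative of `det`, as a multilinear map of the rows, replaces one row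
at a time, and by Cramer's rule each such determinant is an entry of `A.adjugateᵀ * Eᵀ`. -/
lemma hasFDerivAt_det {𝕜 : Type*} [NontriviallyNormedField 𝕜] (A : Matrix n n 𝕜) :
    HasFDerivAt (fun N : Matrix n n 𝕜 => N.det) (tracePairing A.adjugateᵀ) A := by
  let detRows : ContinuousMultilinearMap 𝕜 (fun _ : n => n → 𝕜) 𝕜 :=
    { (detRowAlternating (n := n) (R := 𝕜)).toMultilinearMap with
      cont := continuous_id.matrix_det }
  have h : detRows.linearDeriv A = tracePairing A.adjugateᵀ := by
    refine ContinuousLinearMap.ext fun E : Matrix n n 𝕜 => ?_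
    calc detRows.linearDeriv A E
        = ∑ i, (A.updateRow i (E i)).det := detRows.linearDeriv_apply A E
      _ = ∑ i, (A.adjugateᵀ *ᵥ E i) i := by
        simp only [← cramer_transpose_apply, cramer_eq_adjugate_mulVec, adjugate_transpose]
      _ = (A.adjugateᵀ * Eᵀ).trace := rfl
      _ = (Eᵀ * A.adjugateᵀ).trace := trace_mul_comm _ _
  exact h ▸ detRows.hasFDerivAt A

lemma hasFDerivAt_log_det {A : Matrix n n ℝ} (hA : A.det ≠ 0) :
    HasFDerivAt (fun N : Matrix n n ℝ => Real.log N.det) (tracePairing A⁻¹ᵀ) A := by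
  have h : tracePairing A⁻¹ᵀ = A.det⁻¹ • tracePairing A.adjugateᵀ := by
    rw [inv_def, transpose_smul, map_smul, Ring.inverse_eq_inv']
  exact h ▸ (hasFDerivAt_det A).log hA

end Jacobi

section SchurComplement

variable {m n : Type*} [Fintype m] [Fintype n] [DecidableEq m] [DecidableEq n]

lemma toBlocks₁₂_inv_fromBlocks {R : Type*} [CommRing R] {A : Matrix m m R} {B : Matrix m n R}
    {C : Matrix n m R} {D : Matrix n n R} (hA : IsUnit A) (hG : IsUnit (fromBlocks A B C D)) :
    (fromBlocks A B C D)⁻¹.toBlocks₁₂ = -(A⁻¹ * B * (D - C * A⁻¹ * B)⁻¹) := by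
  let := hA.invertible
  let := hG.invertible
  let := invertibleOfFromBlocks₁₁Invertible A B C D
  rw [← invOf_eq_nonsing_inv (fromBlocks A B C D), invOf_fromBlocks₁₁_eq, toBlocks_fromBlocks₁₂]
  simp only [invOf_eq_nonsing_inv]

lemma hasFDerivAt_log_det_fromBlocks_transpose {A : Matrix m m ℝ} {B : Matrix m n ℝ}
    {D : Matrix n n ℝ} (hA : A.IsSymm) (hD : D.IsSymm) (hA_unit : IsUnit A)
    (hG : (fromBlocks A B Bᵀ D).det ≠ 0) :
    HasFDerivAt (fun N : Matrix m n ℝ => Real.log (fromBlocks A N Nᵀ D).det)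
      ((2 : ℝ) • tracePairing (-(A⁻¹ * B * (D - Bᵀ * A⁻¹ * B)⁻¹))) B := by
  set G := fromBlocks A B Bᵀ D
  have hG_inv : G⁻¹ᵀ = G⁻¹ := by
    rw [transpose_nonsing_inv, (hA.fromBlocks rfl hD).eq]
  have h₂₁ : G⁻¹.toBlocks₂₁ᵀ = G⁻¹.toBlocks₁₂ := congrArg toBlocks₁₂ hG_inv
  have h_grad : (tracePairing G⁻¹ᵀ).comp symmOffDiag =
      (2 : ℝ) • tracePairing (-(A⁻¹ * B * (D - Bᵀ * A⁻¹ * B)⁻¹)) := by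
    rw [tracePairing_comp_symmOffDiag, hG_inv, h₂₁, ← two_smul ℝ, map_smul,
      toBlocks₁₂_inv_fromBlocks hA_unit ((isUnit_iff_isUnit_det _).mpr hG.isUnit)]
  exact ((hasFDerivAt_log_det hG).comp B (hasFDerivAt_fromBlocks_transpose A B D)).congr_fderiv
    h_grad

end SchurComplement

section Contraction

open scoped ComplexOrder

variable {𝕜 m n : Type*} [RCLike 𝕜] [Fintype m]

lemma star_dotProduct_self_eq_norm_sq [Fintype n] (x : n → 𝕜) :
    star x ⬝ᵥ x = ((‖WithLp.toLp 2 x‖ ^ 2 : ℝ) : 𝕜) := by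
  rw [dotProduct_comm, ← EuclideanSpace.inner_toLp_toLp, inner_self_eq_norm_sq_to_K,
    RCLike.ofReal_pow]

variable [DecidableEq n]

lemma posDef_one_sub_conjTranspose_mul_self [Fintype n] {M : Matrix m n 𝕜}
    (hM : ‖(toEuclideanLin M).toContinuousLinearMap‖ < 1) : (1 - Mᴴ * M).PosDef := by
  refine .of_dotProduct_mulVec_pos (isHermitian_one.sub (isHermitian_conjTranspose_mul_self M))
    fun x hx => ?_
  set v : EuclideanSpace 𝕜 n := WithLp.toLp 2 x
  have hv : v ≠ 0 := by simpa [v] using hx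
  have h_quad : star x ⬝ᵥ (1 - Mᴴ * M) *ᵥ x =
      ((‖v‖ ^ 2 - ‖toEuclideanLin M v‖ ^ 2 : ℝ) : 𝕜) := by
    rw [sub_mulVec, one_mulVec, dotProduct_sub, ← mulVec_mulVec, dotProduct_mulVec,
      vecMul_conjTranspose, star_star, star_dotProduct_self_eq_norm_sq,
      star_dotProduct_self_eq_norm_sq, ← RCLike.ofReal_sub]
    rfl
  have h_lt : ‖toEuclideanLin M v‖ < ‖v‖ := by
    calc ‖toEuclideanLin M v‖ ≤ ‖(toEuclideanLin M).toContinuousLinearMap‖ * ‖v‖ :=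
          (toEuclideanLin M).toContinuousLinearMap.le_opNorm v
      _ < 1 * ‖v‖ := by gcongr
      _ = ‖v‖ := one_mul _
  rw [h_quad, RCLike.ofReal_pos, sub_pos]
  gcongr

lemma posDef_fromBlocks_one_conjTranspose_one [Finite n] [DecidableEq m] {M : Matrix m n 𝕜}
    (hM : (1 - Mᴴ * M).PosDef) : (fromBlocks 1 M Mᴴ 1).PosDef := by
  cases nonempty_fintype n
  let : Invertible (1 : Matrix m m 𝕜) := invertibleOne
  have h_semidef : (fromBlocks 1 M Mᴴ 1).PosSemidef := by
    rw [PosDef.fromBlocks₁₁ M 1 PosDef.one]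
    simpa using hM.posSemidef
  rw [h_semidef.posDef_iff_isUnit, isUnit_iff_isUnit_det, det_fromBlocks_one₁₁]
  exact hM.det_pos.ne'.isUnit

end Contraction

section ThinPID

variable {d₁ d₂ : ℕ} {C : Matrix (Fin d₁ ⊕ Fin d₂) (Fin d₁ ⊕ Fin d₂) ℝ}
  {M : Matrix (Fin d₁) (Fin d₂) ℝ}

lemma posDef_SigmaM (hM : specNorm M < 1) : (SigmaM M).PosDef :=
  posDef_fromBlocks_one_conjTranspose_one (posDef_one_sub_conjTranspose_mul_self hM)

lemma add_SigmaM_eq_fromBlocks (hC : C.IsSymm) (N : Matrix (Fin d₁) (Fin d₂) ℝ) :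
    C + SigmaM N = fromBlocks (C.toBlocks₁₁ + 1) (C.toBlocks₁₂ + N) (C.toBlocks₁₂ + N)ᵀ
      (C.toBlocks₂₂ + 1) := by
  have h₂₁ : C.toBlocks₂₁ = C.toBlocks₁₂ᵀ := congrArg toBlocks₂₁ hC.eq.symm
  nth_rw 1 [← fromBlocks_toBlocks C]
  rw [SigmaM, fromBlocks_add, transpose_add, h₂₁]

lemma hasFDerivAt_log_det_add_SigmaM (hC : C.IsSymm) (hG₁₁ : IsUnit (Gmat C M).toBlocks₁₁)
    (hG : (Gmat C M).det ≠ 0) :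
    HasFDerivAt (fun N => Real.log (C + SigmaM N).det)
      ((2 : ℝ) • tracePairing
        (-((Gmat C M).toBlocks₁₁⁻¹ * (Gmat C M).toBlocks₁₂ * (schurB C M)⁻¹))) M := by
  have hG_eq := add_SigmaM_eq_fromBlocks hC M
  simp only [schurB, Gmat, hG_eq, add_SigmaM_eq_fromBlocks hC, toBlocks_fromBlocks₁₁,
    toBlocks_fromBlocks₁₂, toBlocks_fromBlocks₂₂] at hG hG₁₁ ⊢
  have h₁ : (C.toBlocks₁₁ + 1).IsSymm := (hC.submatrix Sum.inl).add isSymm_one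
  have h₂ : (C.toBlocks₂₂ + 1).IsSymm := (hC.submatrix Sum.inr).add isSymm_one
  exact (hasFDerivAt_comp_add_left C.toBlocks₁₂).mpr
    (hasFDerivAt_log_det_fromBlocks_transpose h₁ h₂ hG₁₁ hG)

lemma hasFDerivAt_log_det_SigmaM (hSigma : (SigmaM M).det ≠ 0) :
    HasFDerivAt (fun N => Real.log (SigmaM N).det)
      ((2 : ℝ) • tracePairing (-(M * (1 - Mᵀ * M)⁻¹))) M := by
  simpa [SigmaM] using hasFDerivAt_log_det_fromBlocks_transpose isSymm_one isSymm_one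
    isUnit_one hSigma

theorem thinPID_gradient_general (hC : C.IsSymm) (hG₁₁ : IsUnit (Gmat C M).toBlocks₁₁)
    (hG : 0 < (Gmat C M).det) (hSigma : 0 < (SigmaM M).det) :
    HasFDerivAt (thinPIDObjective C)
      ((2 : ℝ) • tracePairing
        (-((Gmat C M).toBlocks₁₁⁻¹ * (Gmat C M).toBlocks₁₂ * (schurB C M)⁻¹)
          + M * (1 - Mᵀ * M)⁻¹)) M := by
  have h_sub (X Y : Matrix (Fin d₁) (Fin d₂) ℝ) :
      (2 : ℝ) • tracePairing X - (2 : ℝ) • tracePairing (-Y) = (2 : ℝ) • tracePairing (X + Y) := by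
    rw [map_neg, smul_neg, sub_neg_eq_add, map_add, smul_add]
  exact ((hasFDerivAt_log_det_add_SigmaM hC hG₁₁ hG.ne').sub
    (hasFDerivAt_log_det_SigmaM hSigma.ne')).congr_fderiv (h_sub _ _)

end ThinPID

/-- **Gradient of the Thin-PID objective** (Proposition 3.4): for `C` positive semidefinite
and `‖M‖₂ < 1`, the objective `L(M) = log det (C + Σ(M)) − log det Σ(M)` is differentiable
at `M`, and its directional derivative along `E` is
`2 · trace (Eᵀ (−G₁₁⁻¹ G₁₂ B⁻¹ + M (I − MᵀM)⁻¹))`. -/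
theorem thinPID_gradient {d₁ d₂ : ℕ}
    (C : Matrix (Fin d₁ ⊕ Fin d₂) (Fin d₁ ⊕ Fin d₂) ℝ) (hC : C.PosSemidef)
    (M : Matrix (Fin d₁) (Fin d₂) ℝ) (hM : specNorm M < 1) :
    ∃ L' : Matrix (Fin d₁) (Fin d₂) ℝ →L[ℝ] ℝ,
      HasFDerivAt (thinPIDObjective C) L' M ∧
        ∀ E : Matrix (Fin d₁) (Fin d₂) ℝ,
          L' E = 2 * (Eᵀ *
            (-((Gmat C M).toBlocks₁₁⁻¹ * (Gmat C M).toBlocks₁₂ * (schurB C M)⁻¹)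
              + M * ((1 : Matrix (Fin d₂) (Fin d₂) ℝ) - Mᵀ * M)⁻¹)).trace := by
  have hC_symm : C.IsSymm :=
    (conjTranspose_eq_transpose_of_trivial C).symm.trans hC.isHermitian
  have hSigma : (SigmaM M).PosDef := posDef_SigmaM hM
  have hG : (Gmat C M).PosDef := PosDef.posSemidef_add hC hSigma
  have hG₁₁ : (Gmat C M).toBlocks₁₁.PosDef := hG.submatrix Sum.inl_injective
  exact ⟨_, thinPID_gradient_general hC_symm hG₁₁.isUnit hG.det_pos hSigma.det_pos, fun _ => rfl⟩
end
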